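/- Let α ∈ (0,1] and C₁ ≥ 0, and let u be a classical solution of the extended drift–diffusion equation with drift b and right-hand side f such that sup_{[−1,0]×B_1^+} |u| ≤ 1, ‖u‖_{C^α([−1,0]×B_1^0)} ≤ C₁ and sup_{t∈[−1,0]} ‖u(t,·,·)‖_{C^α(closure(B_1^+))} ≤ C₁. Then for every ε > 0 there exists δ > 0, depending only on ε, α, C₁, s and n, such that if sup_{[−1,0]×B_1^0} |b| < δ and sup_{[−1,0]×B_1^0} |f| < δ, then every classical solution v of the localized fractional heat equation that agrees with u on ({−1} × closure(B_1^+)) ∪ ([−1,0] × closure((∂B_1)^+)) satisfies sup_{[−1,0]×B_1^+} |u − v| ≤ ε. -/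

import Mathlib

open Set Filter Topology MeasureTheory
open scoped RealInnerProductSpace

noncomputable section

abbrev En (n : ℕ) := EuclideanSpace ℝ (Fin n)

/-- The open upper half ball `B_r^+`. -/
def halfBall (n : ℕ) (r : ℝ) : Set (En n × ℝ) :=
  {p | ‖p.1‖ ^ 2 + p.2 ^ 2 < r ^ 2 ∧ 0 < p.2}

/-- The closure of the upper half ball. -/
def closedHalfBall (n : ℕ) (r : ℝ) : Set (En n × ℝ) :=
  {p | ‖p.1‖ ^ 2 + p.2 ^ 2 ≤ r ^ 2 ∧ 0 ≤ p.2}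

/-- `B_r^+ ∪ B_r^0`. -/
def halfBallWithBase (n : ℕ) (r : ℝ) : Set (En n × ℝ) :=
  {p | ‖p.1‖ ^ 2 + p.2 ^ 2 < r ^ 2 ∧ 0 ≤ p.2}

/-- The flat ball `B_r^0` in `ℝⁿ`. -/
def flatBall (n : ℕ) (r : ℝ) : Set (En n) := {x | ‖x‖ < r}

/-- `(∂B_1)^+`. -/
def spherePlus (n : ℕ) : Set (En n × ℝ) := {p | ‖p.1‖ ^ 2 + p.2 ^ 2 = 1 ∧ 0 < p.2}

/-- closure of `(∂B_1)^+`. -/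
def closedSpherePlus (n : ℕ) : Set (En n × ℝ) := {p | ‖p.1‖ ^ 2 + p.2 ^ 2 = 1 ∧ 0 ≤ p.2}

/-- Second directional derivative of `u` at `p` in direction `v`. -/
def D2 {n : ℕ} (u : En n × ℝ → ℝ) (p v : En n × ℝ) : ℝ :=
  fderiv ℝ (fun q => fderiv ℝ u q v) p v

/-- The Laplacian in the `n+1` variables `(x, y)`. -/
def lap {n : ℕ} (u : En n × ℝ → ℝ) (p : En n × ℝ) : ℝ :=
  (∑ i : Fin n, D2 u p (EuclideanSpace.single i 1, 0)) + D2 u p (0, 1)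

/-- `u` is `a`-harmonic on `Ω`: it is `C²` there and `Δu + (a/y) ∂_y u = 0`. -/
def IsAHarmonicOn {n : ℕ} (a : ℝ) (u : En n × ℝ → ℝ) (Ω : Set (En n × ℝ)) : Prop :=
  ContDiffOn ℝ 2 u Ω ∧ ∀ p ∈ Ω, lap u p + (a / p.2) * fderiv ℝ u p (0, 1) = 0

/-- `lim_{y → 0⁺} y^a ∂_y w(x, y) = L`. -/
def NormalDerivLimit {n : ℕ} (a : ℝ) (w : En n × ℝ → ℝ) (x : En n) (L : ℝ) : Prop :=
  Tendsto (fun y : ℝ => y ^ a * fderiv ℝ w (x, y) (0, 1)) (𝓝[>] (0 : ℝ)) (𝓝 L)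

/-- The boundary-restriction `(t, x) ↦ u(t, x, 0)`. -/
def bdryFun {n : ℕ} (u : ℝ → En n × ℝ → ℝ) : ℝ × En n → ℝ := fun q => u q.1 (q.2, 0)

/-- A classical solution of the extended drift–diffusion equation on
`[-1,0] × closure (B_1^+)` with drift `b` and right-hand side `f`. -/
def IsExtDDSolution {n : ℕ} (a : ℝ) (b : ℝ → En n → En n) (f : ℝ → En n → ℝ)
    (u : ℝ → En n × ℝ → ℝ) : Prop :=
  ContinuousOn (fun q : ℝ × (En n × ℝ) => u q.1 q.2) (Icc (-1 : ℝ) 0 ×ˢ closedHalfBall n 1) ∧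
  (∀ t ∈ Icc (-1 : ℝ) 0, IsAHarmonicOn a (u t) (halfBall n 1)) ∧
  (∀ q ∈ Ioc (-1 : ℝ) 0 ×ˢ flatBall n 1,
      DifferentiableWithinAt ℝ (bdryFun u) (Ioc (-1 : ℝ) 0 ×ˢ flatBall n 1) q) ∧
  (∀ t x, (t, x) ∈ Ioc (-1 : ℝ) 0 ×ˢ flatBall n 1 →
      ∃ L : ℝ, NormalDerivLimit a (u t) x L ∧
        fderivWithin ℝ (bdryFun u) (Ioc (-1 : ℝ) 0 ×ˢ flatBall n 1) (t, x) (1, 0) +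
          fderivWithin ℝ (bdryFun u) (Ioc (-1 : ℝ) 0 ×ˢ flatBall n 1) (t, x) (0, b t x) -
          L = f t x)

/-- A classical solution of the localized fractional heat equation on
`[-1,0] × closure (B_1^+)`. -/
def IsFracHeatSolution {n : ℕ} (a : ℝ) (u : ℝ → En n × ℝ → ℝ) : Prop :=
  ContinuousOn (fun q : ℝ × (En n × ℝ) => u q.1 q.2) (Icc (-1 : ℝ) 0 ×ˢ closedHalfBall n 1) ∧
  (∀ t ∈ Icc (-1 : ℝ) 0, IsAHarmonicOn a (u t) (halfBall n 1)) ∧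
  (∀ t ∈ Ioc (-1 : ℝ) 0, ∀ x ∈ flatBall n 1,
      DifferentiableWithinAt ℝ (fun τ => u τ (x, 0)) (Ioc (-1 : ℝ) 0) t ∧
      NormalDerivLimit a (u t) x (derivWithin (fun τ => u τ (x, 0)) (Ioc (-1 : ℝ) 0) t))

/-!
Both `u` and `v` are `a`-harmonic and they agree on the parabolic boundary, so only the equation on
the base can separate them. It cannot simply be subtracted, as `b · ∇ₓu` is small only where `∇ₓu`
is bounded. Doubling the tangential variable moves the derivative off `u`: at a maximum of
`u(t, x + z, y) - v(t, x, y) - H|z|² + η(y² - t - 1)` the gradient `∇ₓu` becomes `2Hz`, so the drift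
contributes at most `2H|z||b|`, and a maximum on the base is impossible once `b` and `f` are small
compared with `η` and `H`. In the interior it is impossible since `y²` is strictly subharmonic.

The maximum must also be kept away from the lateral boundary, where `v` has no modulus of continuity
a priori. There `v` is compared with a barrier at each boundary point of the base, at a rate that
depends only on the modulus of `u`, and `v - u` is then controlled in the interior by adding a
multiple of `|X|²`.
-/

section SecondOrder

variable {n : ℕ} {u w : En n × ℝ → ℝ} {p v : En n × ℝ} {a : ℝ}

lemma eventually_differentiableAt_of_contDiffAt_two (hu : ContDiffAt ℝ 2 u p) :
    ∀ᶠ q in 𝓝 p, DifferentiableAt ℝ u q :=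
  (hu.eventually (by simp)).mono fun _ hq => hq.differentiableAt two_ne_zero

lemma differentiableAt_fderiv_apply (hu : ContDiffAt ℝ 2 u p) :
    DifferentiableAt ℝ (fun q => fderiv ℝ u q v) p :=
  ((hu.fderiv_right (m := 1) (by norm_num)).differentiableAt one_ne_zero).clm_apply
    (differentiableAt_const v)

lemma D2_add (hu : ContDiffAt ℝ 2 u p) (hw : ContDiffAt ℝ 2 w p) :
    D2 (fun q => u q + w q) p v = D2 u p v + D2 w p v := by
  have hfderiv : (fun q => fderiv ℝ (fun q => u q + w q) q v) =ᶠ[𝓝 p]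
      fun q => fderiv ℝ u q v + fderiv ℝ w q v := by
    filter_upwards [eventually_differentiableAt_of_contDiffAt_two hu,
      eventually_differentiableAt_of_contDiffAt_two hw] with q hqu hqw
    simp [fderiv_fun_add hqu hqw]
  rw [D2, hfderiv.fderiv_eq,
    fderiv_fun_add (differentiableAt_fderiv_apply hu) (differentiableAt_fderiv_apply hw)]
  rfl

lemma D2_const_mul (hu : ContDiffAt ℝ 2 u p) (c : ℝ) :
    D2 (fun q => c * u q) p v = c * D2 u p v := by
  have hfderiv : (fun q => fderiv ℝ (fun q => c * u q) q v) =ᶠ[𝓝 p]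
      fun q => c * fderiv ℝ u q v := by
    filter_upwards [eventually_differentiableAt_of_contDiffAt_two hu] with q hq
    simp [fderiv_const_mul hq]
  rw [D2, hfderiv.fderiv_eq, fderiv_const_mul (differentiableAt_fderiv_apply hu)]
  rfl

lemma D2_comp_add_right (z : En n × ℝ) : D2 (fun q => u (q + z)) p v = D2 u (p + z) v := by
  simp only [D2, fderiv_comp_add_right]
  rw [fderiv_comp_add_right (f := fun q => fderiv ℝ u q v)]

lemma D2_comp_clm {g g' : ℝ → ℝ} {c : ℝ} (ℓ : En n × ℝ →L[ℝ] ℝ)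
    (hg : ∀ᶠ r in 𝓝 (ℓ p), HasDerivAt g (g' r) r) (hg' : HasDerivAt g' c (ℓ p)) :
    D2 (fun q => g (ℓ q)) p v = c * ℓ v ^ 2 := by
  have hfderiv : (fun q => fderiv ℝ (fun q => g (ℓ q)) q v) =ᶠ[𝓝 p] fun q => g' (ℓ q) * ℓ v := by
    filter_upwards [ℓ.continuous.continuousAt.eventually hg] with q hq
    have hchain : HasFDerivAt (fun q => g (ℓ q)) (g' (ℓ q) • (ℓ : En n × ℝ →L[ℝ] ℝ)) q :=
      hq.comp_hasFDerivAt q ℓ.hasFDerivAt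
    simp [hchain.fderiv]
  have hchain : HasFDerivAt (fun q => g' (ℓ q)) (c • (ℓ : En n × ℝ →L[ℝ] ℝ)) p :=
    hg'.comp_hasFDerivAt p ℓ.hasFDerivAt
  rw [D2, hfderiv.fderiv_eq, (hchain.mul_const (ℓ v)).fderiv]
  simp only [smul_apply, smul_eq_mul]
  ring

/-- A strict second-order increase at a critical point forces a strict local minimum, so at a local
maximum it can only happen if the function is locally constant. -/
lemma D2_nonpos_of_isLocalMax (hu : ContDiffAt ℝ 2 u p) (hmax : IsLocalMax u p) :
    D2 u p v ≤ 0 := by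
  set g : ℝ → ℝ := fun r => u (p + r • v)
  have hline (r : ℝ) : HasDerivAt (fun r : ℝ => p + r • v) v r := by
    simpa using ((hasDerivAt_id r).smul_const v).const_add p
  have htendsto : Tendsto (fun r : ℝ => p + r • v) (𝓝 0) (𝓝 p) := by
    simpa using (hline 0).continuousAt.tendsto
  have hg : deriv g =ᶠ[𝓝 0] fun r => fderiv ℝ u (p + r • v) v := by
    filter_upwards [htendsto.eventually (eventually_differentiableAt_of_contDiffAt_two hu)]
      with r hr using (hr.hasFDerivAt.comp_hasDerivAt r (hline r)).deriv
  have hg' : deriv (deriv g) 0 = D2 u p v := by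
    have hfderiv : HasFDerivAt (fun q => fderiv ℝ u q v)
        (fderiv ℝ (fun q => fderiv ℝ u q v) p) (p + (0 : ℝ) • v) := by
      simpa using (differentiableAt_fderiv_apply hu).hasFDerivAt
    rw [hg.deriv_eq]
    exact (hfderiv.comp_hasDerivAt 0 (hline 0)).deriv
  have hgmax : IsLocalMax g 0 := by
    filter_upwards [htendsto.eventually hmax] with r hr
    simpa [g] using hr
  by_contra! hpos
  have hgcont : ContinuousAt g 0 := by
    refine ContinuousAt.comp (g := u) ?_ (hline 0).continuousAt
    simpa using hu.continuousAt
  have hgmin : IsLocalMin g 0 :=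
    isLocalMin_of_deriv_deriv_pos (hg' ▸ hpos) hgmax.deriv_eq_zero hgcont
  have hconst : g =ᶠ[𝓝 0] fun _ => g 0 := by
    filter_upwards [hgmin, hgmax] with r hle hge using le_antisymm hge hle
  have : deriv (deriv g) 0 = 0 := by simp [hconst.deriv.deriv_eq]
  linarith

/-- The operator `Δ + (a / y) ∂_y`, whose null functions are the `a`-harmonic ones. -/
def aLaplacian (a : ℝ) (u : En n × ℝ → ℝ) (p : En n × ℝ) : ℝ :=
  lap u p + (a / p.2) * fderiv ℝ u p (0, 1)

lemma aLaplacian_add (hu : ContDiffAt ℝ 2 u p) (hw : ContDiffAt ℝ 2 w p) :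
    aLaplacian a (fun q => u q + w q) p = aLaplacian a u p + aLaplacian a w p := by
  simp only [aLaplacian, lap, D2_add hu hw, Finset.sum_add_distrib,
    fderiv_fun_add (hu.differentiableAt two_ne_zero) (hw.differentiableAt two_ne_zero),
    add_apply]
  ring

lemma aLaplacian_const_mul (hu : ContDiffAt ℝ 2 u p) (c : ℝ) :
    aLaplacian a (fun q => c * u q) p = c * aLaplacian a u p := by
  simp only [aLaplacian, lap, D2_const_mul hu, ← Finset.mul_sum,
    fderiv_const_mul (hu.differentiableAt two_ne_zero), smul_apply, smul_eq_mul]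
  ring

lemma aLaplacian_neg (hu : ContDiffAt ℝ 2 u p) :
    aLaplacian a (fun q => -u q) p = -aLaplacian a u p := by
  simpa only [neg_one_mul] using aLaplacian_const_mul (a := a) hu (-1)

lemma aLaplacian_sub (hu : ContDiffAt ℝ 2 u p) (hw : ContDiffAt ℝ 2 w p) :
    aLaplacian a (fun q => u q - w q) p = aLaplacian a u p - aLaplacian a w p := by
  simpa only [sub_eq_add_neg, aLaplacian_neg hw] using aLaplacian_add (a := a) hu hw.neg

lemma aLaplacian_const_add (c : ℝ) : aLaplacian a (fun q => c + u q) p = aLaplacian a u p := by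
  simp [aLaplacian, lap, D2]

lemma aLaplacian_comp_add_base (z : En n) :
    aLaplacian a (fun q => u (q + (z, 0))) p = aLaplacian a u (p + (z, 0)) := by
  simp [aLaplacian, lap, D2_comp_add_right, fderiv_comp_add_right]

lemma aLaplacian_comp_inner_fst {g g' : ℝ → ℝ} {c : ℝ} (e : En n)
    (hg : ∀ᶠ r in 𝓝 ⟪e, p.1⟫, HasDerivAt g (g' r) r) (hg' : HasDerivAt g' c ⟪e, p.1⟫) :
    aLaplacian a (fun q => g ⟪e, q.1⟫) p = c * ‖e‖ ^ 2 := by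
  let ℓ : En n × ℝ →L[ℝ] ℝ := (innerSL ℝ e).comp (ContinuousLinearMap.fst ℝ _ _)
  have hD2 (v : En n × ℝ) : D2 (fun q => g ⟪e, q.1⟫) p v = c * ⟪e, v.1⟫ ^ 2 :=
    D2_comp_clm ℓ hg hg'
  have hchain : HasFDerivAt (fun q : En n × ℝ => g ⟪e, q.1⟫) (g' ⟪e, p.1⟫ • ℓ) p :=
    hg.self_of_nhds.comp_hasFDerivAt p ℓ.hasFDerivAt
  simp [aLaplacian, lap, hD2, hchain.fderiv, ℓ, EuclideanSpace.real_norm_sq_eq, Finset.mul_sum,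
    EuclideanSpace.inner_single_right]

lemma aLaplacian_comp_snd {g g' : ℝ → ℝ} {c : ℝ} (hg : ∀ᶠ r in 𝓝 p.2, HasDerivAt g (g' r) r)
    (hg' : HasDerivAt g' c p.2) :
    aLaplacian a (fun q : En n × ℝ => g q.2) p = c + a / p.2 * g' p.2 := by
  let ℓ : En n × ℝ →L[ℝ] ℝ := ContinuousLinearMap.snd ℝ _ _
  have hD2 (v : En n × ℝ) : D2 (fun q => g q.2) p v = c * v.2 ^ 2 := D2_comp_clm ℓ hg hg'
  have hchain : HasFDerivAt (fun q : En n × ℝ => g q.2) (g' p.2 • ℓ) p :=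
    hg.self_of_nhds.comp_hasFDerivAt p ℓ.hasFDerivAt
  simp [aLaplacian, lap, hD2, hchain.fderiv, ℓ]

lemma aLaplacian_snd_sq (hp : p.2 ≠ 0) :
    aLaplacian a (fun q : En n × ℝ => q.2 ^ 2) p = 2 * (1 + a) := by
  have h := aLaplacian_comp_snd (a := a) (p := p) (g := fun r => r ^ 2) (g' := fun r => 2 * r)
    (c := 2) (Eventually.of_forall fun r => by simpa using hasDerivAt_pow 2 r)
    (by simpa using (hasDerivAt_id p.2).const_mul 2)
  rw [h]
  field_simp

lemma aLaplacian_norm_fst_sq :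
    aLaplacian a (fun q : En n × ℝ => ‖q.1‖ ^ 2) p = 2 * n := by
  have hfderiv (q v : En n × ℝ) :
      fderiv ℝ (fun q : En n × ℝ => ‖q.1‖ ^ 2) q v = 2 * ⟪v.1, q.1⟫ := by
    have hsq : HasFDerivAt (fun q : En n × ℝ => ‖q.1‖ ^ 2) _ q := hasFDerivAt_fst.norm_sq
    rw [hsq.fderiv, real_inner_comm]
    simp
  have hD2 (v : En n × ℝ) : D2 (fun q : En n × ℝ => ‖q.1‖ ^ 2) p v = 2 * ‖v.1‖ ^ 2 := by
    let ℓ : En n × ℝ →L[ℝ] ℝ := (innerSL ℝ v.1).comp (ContinuousLinearMap.fst ℝ _ _)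
    have hlin : HasFDerivAt (fun q : En n × ℝ => 2 * ⟪v.1, q.1⟫) ((2 : ℝ) • ℓ) p :=
      ℓ.hasFDerivAt.const_mul 2
    simp [D2, hfderiv, hlin.fderiv, ℓ]
  simp [aLaplacian, lap, hD2, hfderiv, mul_comm]

lemma aLaplacian_norm_fst_sq_add_snd_sq (hp : p.2 ≠ 0) :
    aLaplacian a (fun q : En n × ℝ => ‖q.1‖ ^ 2 + q.2 ^ 2) p = 2 * n + 2 * (1 + a) := by
  rw [aLaplacian_add (contDiff_fst.norm_sq ℝ).contDiffAt (contDiff_snd.pow 2).contDiffAt,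
    aLaplacian_norm_fst_sq, aLaplacian_snd_sq hp]

lemma aLaplacian_nonpos_of_isLocalMax (hu : ContDiffAt ℝ 2 u p) (hmax : IsLocalMax u p) :
    aLaplacian a u p ≤ 0 := by
  simp only [aLaplacian, lap, hmax.fderiv_eq_zero, zero_apply, mul_zero,
    add_zero]
  exact add_nonpos (Finset.sum_nonpos fun i _ => D2_nonpos_of_isLocalMax hu hmax)
    (D2_nonpos_of_isLocalMax hu hmax)

end SecondOrder

section HalfBall

variable {n : ℕ} {r ρ : ℝ} {x z : En n} {X : En n × ℝ}

lemma isOpen_halfBall : IsOpen (halfBall n r) :=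
  (isOpen_lt ((continuous_fst.norm.pow 2).add (continuous_snd.pow 2)) continuous_const).inter
    (isOpen_lt continuous_const continuous_snd)

lemma isOpen_flatBall : IsOpen (flatBall n r) := isOpen_lt continuous_norm continuous_const

lemma isCompact_closedHalfBall : IsCompact (closedHalfBall n r) := by
  refine Metric.isCompact_of_isClosed_isBounded ?_ ?_
  · exact (isClosed_le ((continuous_fst.norm.pow 2).add (continuous_snd.pow 2))
      continuous_const).inter
      (isClosed_le continuous_const continuous_snd)
  · refine (Metric.isBounded_closedBall (x := 0) (r := |r|)).subset fun X hX =>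
      mem_closedBall_zero_iff.2 (max_le ?_ ?_)
    · rw [← abs_norm]
      exact sq_le_sq.1 (by nlinarith [hX.1, sq_nonneg X.2])
    · exact sq_le_sq.1 (by nlinarith [hX.1, sq_nonneg ‖X.1‖])

lemma halfBall_subset_closedHalfBall : halfBall n r ⊆ closedHalfBall n r :=
  fun _ hX => ⟨hX.1.le, hX.2.le⟩

lemma halfBall_one_sub_subset (hρ : ρ ∈ Ioo (0 : ℝ) 1) : halfBall n (1 - ρ) ⊆ halfBall n 1 :=
  fun _ hp => ⟨hp.1.trans (by nlinarith [hρ.1, hρ.2]), hp.2⟩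

lemma closedHalfBall_one_sub_subset (hρ : ρ ∈ Ioo (0 : ℝ) 1) :
    closedHalfBall n (1 - ρ) ⊆ closedHalfBall n 1 :=
  fun _ hX => ⟨hX.1.trans (by nlinarith [hρ.1, hρ.2]), hX.2⟩

lemma norm_fst_le_of_mem_closedHalfBall (hr : 0 ≤ r) (hX : X ∈ closedHalfBall n r) : ‖X.1‖ ≤ r :=
  (sq_le_sq₀ (norm_nonneg _) hr).1 (by nlinarith [hX.1, sq_nonneg X.2])

lemma fst_mem_flatBall (hr : 0 ≤ r) (hX : ‖X.1‖ ^ 2 + X.2 ^ 2 < r ^ 2) : X.1 ∈ flatBall n r :=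
  (sq_lt_sq₀ (norm_nonneg _) hr).1 (by nlinarith [sq_nonneg X.2])

lemma base_mem_closedHalfBall (hx : ‖x‖ ≤ r) : (x, (0 : ℝ)) ∈ closedHalfBall n r :=
  ⟨by simpa using pow_le_pow_left₀ (norm_nonneg x) hx 2, le_rfl⟩

lemma eventually_mem_halfBall (hx : x ∈ flatBall n r) :
    ∀ᶠ y in 𝓝[>] (0 : ℝ), (x, y) ∈ halfBall n r := by
  have hlim : Tendsto (fun y : ℝ => ‖x‖ ^ 2 + y ^ 2) (𝓝 0) (𝓝 (‖x‖ ^ 2)) :=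
    Continuous.tendsto' (by fun_prop) _ _ (by simp)
  have hlt : ‖x‖ ^ 2 < r ^ 2 := pow_lt_pow_left₀ hx (norm_nonneg x) two_ne_zero
  filter_upwards [nhdsWithin_le_nhds (hlim.eventually_lt_const hlt), self_mem_nhdsWithin]
    with y hy hpos using ⟨hy, hpos⟩

lemma norm_add_sq_add_sq_le (hρ : ρ ≤ 1) (hX : X ∈ closedHalfBall n (1 - ρ)) :
    ‖X.1 + z‖ ^ 2 + X.2 ^ 2 ≤ (1 - ρ + ‖z‖) ^ 2 := by
  have hX₁ := norm_fst_le_of_mem_closedHalfBall (by linarith) hX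
  have hadd := pow_le_pow_left₀ (norm_nonneg _) (norm_add_le X.1 z) 2
  nlinarith [hX.1, mul_nonneg (norm_nonneg z) (sub_nonneg.2 hX₁)]

lemma add_base_mem_closedHalfBall (hρ : ρ ≤ 1) (hX : X ∈ closedHalfBall n (1 - ρ))
    (hz : ‖z‖ ≤ ρ) : X + (z, 0) ∈ closedHalfBall n 1 := by
  refine ⟨?_, by simpa using hX.2⟩
  have hle := norm_add_sq_add_sq_le (z := z) hρ hX
  simp only [Prod.fst_add, Prod.snd_add, add_zero]
  nlinarith [norm_nonneg z]

lemma add_base_mem_halfBall (hρ : ρ ≤ 1) (hX : X ∈ closedHalfBall n (1 - ρ)) (hpos : 0 < X.2)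
    (hz : ‖z‖ < ρ) : X + (z, 0) ∈ halfBall n 1 := by
  refine ⟨?_, by simpa using hpos⟩
  have hle := norm_add_sq_add_sq_le (z := z) hρ hX
  simp only [Prod.fst_add, Prod.snd_add, add_zero]
  nlinarith [norm_nonneg z]

end HalfBall

section Modulus

/-- `ω` is a modulus of continuity: monotone on `[0, ∞)` with `ω r → 0 = ω 0` as `r → 0⁺`. -/
structure IsModulus (ω : ℝ → ℝ) : Prop where
  monotoneOn : MonotoneOn ω (Ici 0)
  tendsto_zero : Tendsto ω (𝓝[≥] 0) (𝓝 0)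

variable {ω : ℝ → ℝ}

lemma IsModulus.apply_zero (hω : IsModulus ω) : ω 0 = 0 :=
  tendsto_nhds_unique (tendsto_pure_nhds ω 0)
    (hω.tendsto_zero.mono_left (pure_le_nhdsWithin self_mem_Ici))

lemma IsModulus.nonneg (hω : IsModulus ω) {r : ℝ} (hr : 0 ≤ r) : 0 ≤ ω r :=
  hω.apply_zero ▸ hω.monotoneOn self_mem_Ici hr hr

lemma IsModulus.add {ω' : ℝ → ℝ} (hω : IsModulus ω) (hω' : IsModulus ω') :
    IsModulus fun r => ω r + ω' r where
  monotoneOn := hω.monotoneOn.add hω'.monotoneOn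
  tendsto_zero := by simpa using hω.tendsto_zero.add hω'.tendsto_zero

lemma isModulus_const_mul_rpow {C α : ℝ} (hC : 0 ≤ C) (hα : 0 < α) :
    IsModulus fun r => C * r ^ α where
  monotoneOn _ hr _ _ hle := mul_le_mul_of_nonneg_left (Real.rpow_le_rpow hr hle hα.le) hC
  tendsto_zero := by
    have hcont : ContinuousAt (fun r : ℝ => C * r ^ α) 0 :=
      continuousAt_const.mul (Real.continuousAt_rpow_const 0 α (.inr hα.le))
    simpa [Real.zero_rpow hα.ne'] using hcont.tendsto.mono_left nhdsWithin_le_nhds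

lemma IsModulus.exists_le_add_mul_rpow (hω : IsModulus ω) {ε p : ℝ} (hε : 0 < ε) (hp : 0 < p)
    (R : ℝ) : ∃ K ≥ 0, ∀ r ∈ Icc 0 R, ω r ≤ ε + K * r ^ p := by
  obtain ⟨d, hd, hsmall⟩ := mem_nhdsGE_iff_exists_Ico_subset.1
    (hω.tendsto_zero.eventually_lt_const hε)
  have hd : 0 < d := hd
  refine ⟨ω |R| / d ^ p, div_nonneg (hω.nonneg (abs_nonneg R)) (by positivity), fun r hr => ?_⟩
  have hR := hω.nonneg (abs_nonneg R)
  rcases lt_or_ge r d with hrd | hrd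
  · have : ω r < ε := hsmall ⟨hr.1, hrd⟩
    have : 0 ≤ ω |R| / d ^ p * r ^ p := by have := hr.1; positivity
    linarith
  · calc ω r ≤ ω |R| := hω.monotoneOn hr.1 (abs_nonneg R) (hr.2.trans (le_abs_self R))
      _ = ω |R| / d ^ p * d ^ p := by field_simp
      _ ≤ ω |R| / d ^ p * r ^ p := by gcongr
      _ ≤ ε + ω |R| / d ^ p * r ^ p := by linarith

/-- `ω` is a modulus of continuity in space of `u` on the closed half ball, uniformly in time, and a
modulus of continuity in time of the trace of `u`, uniformly on the flat ball. -/
structure HasModulus {n : ℕ} (ω : ℝ → ℝ) (u : ℝ → En n × ℝ → ℝ) : Prop where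
  space : ∀ t ∈ Icc (-1 : ℝ) 0, ∀ p ∈ closedHalfBall n 1, ∀ q ∈ closedHalfBall n 1,
    |u t p - u t q| ≤ ω ‖p - q‖
  time : ∀ t ∈ Icc (-1 : ℝ) 0, ∀ t' ∈ Icc (-1 : ℝ) 0, ∀ x ∈ flatBall n 1,
    |u t (x, 0) - u t' (x, 0)| ≤ ω |t - t'|

variable {n : ℕ} {u : ℝ → En n × ℝ → ℝ}

lemma HasModulus.neg (hu : HasModulus ω u) : HasModulus ω fun t p => -u t p where
  space t ht p hp q hq := by simpa only [neg_sub_neg, abs_sub_comm] using hu.space t ht p hp q hq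
  time t ht t' ht' x hx := by simpa only [neg_sub_neg, abs_sub_comm] using hu.time t ht t' ht' x hx

lemma HasModulus.time_of_norm_le (hu : HasModulus ω u) (hω : IsModulus ω) {t t' : ℝ}
    (ht : t ∈ Icc (-1 : ℝ) 0) (ht' : t' ∈ Icc (-1 : ℝ) 0) {x : En n} (hx : ‖x‖ ≤ 1) :
    |u t (x, 0) - u t' (x, 0)| ≤ ω |t - t'| := by
  have hlim : Tendsto (fun r => ω r + ω |t - t'| + ω r) (𝓝[>] 0) (𝓝 (0 + ω |t - t'| + 0)) := by
    have := hω.tendsto_zero.mono_left (nhdsWithin_mono 0 Ioi_subset_Ici_self)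
    exact (this.add tendsto_const_nhds).add this
  suffices ∀ᶠ r in 𝓝[>] (0 : ℝ), |u t (x, 0) - u t' (x, 0)| ≤ ω r + ω |t - t'| + ω r by
    simpa using ge_of_tendsto hlim this
  filter_upwards [Ioo_mem_nhdsGT one_pos] with r hr
  set x' := (1 - r) • x
  have hx' : ‖x'‖ < 1 := by
    rw [norm_smul, Real.norm_of_nonneg (by linarith [hr.2])]
    nlinarith [hr.1, hr.2, norm_nonneg x]
  have hdist : ‖((x, 0) : En n × ℝ) - (x', 0)‖ ≤ r := by
    have : x - x' = r • x := by simp only [x']; module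
    simp only [Prod.mk_sub_mk, sub_self, this, Prod.norm_mk, norm_smul, Real.norm_eq_abs,
      abs_of_pos hr.1, norm_zero]
    exact max_le (by nlinarith [hr.1]) hr.1.le
  have hspace (τ : ℝ) (hτ : τ ∈ Icc (-1 : ℝ) 0) : |u τ (x, 0) - u τ (x', 0)| ≤ ω r :=
    (hu.space τ hτ _ (base_mem_closedHalfBall hx) _ (base_mem_closedHalfBall hx'.le)).trans
      (hω.monotoneOn (norm_nonneg _) hr.1.le hdist)
  have htime := hu.time t ht t' ht' x' hx'
  have := hspace t ht
  have := hspace t' ht'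
  grind

end Modulus

section NormalDerivative

variable {n : ℕ} {a L M : ℝ} {w φ : En n × ℝ → ℝ} {x : En n}

lemma NormalDerivLimit.add (hL : NormalDerivLimit a w x L) (hM : NormalDerivLimit a φ x M)
    (hw : ∀ᶠ y in 𝓝[>] (0 : ℝ), DifferentiableAt ℝ w (x, y))
    (hφ : ∀ᶠ y in 𝓝[>] (0 : ℝ), DifferentiableAt ℝ φ (x, y)) :
    NormalDerivLimit a (fun q => w q + φ q) x (L + M) := by
  refine (Tendsto.add hL hM).congr' ?_
  filter_upwards [hw, hφ] with y hwy hφy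
  simp [fderiv_fun_add hwy hφy, mul_add]

lemma NormalDerivLimit.const_mul (hL : NormalDerivLimit a w x L) (c : ℝ) :
    NormalDerivLimit a (fun q => c * w q) x (c * L) := by
  refine (Tendsto.const_mul c hL).congr fun y => ?_
  have hsmul := congrFun (fderiv_const_smul_field (𝕜 := ℝ) (f := w) c) (x, y)
  change _ = y ^ a * fderiv ℝ (c • w) (x, y) (0, 1)
  rw [hsmul]
  simp only [Pi.smul_apply, smul_apply, smul_eq_mul]
  ring

lemma NormalDerivLimit.neg (hL : NormalDerivLimit a w x L) :
    NormalDerivLimit a (fun q => -w q) x (-L) := by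
  simpa only [neg_one_mul] using hL.const_mul (-1)

lemma NormalDerivLimit.sub (hL : NormalDerivLimit a w x L) (hM : NormalDerivLimit a φ x M)
    (hw : ∀ᶠ y in 𝓝[>] (0 : ℝ), DifferentiableAt ℝ w (x, y))
    (hφ : ∀ᶠ y in 𝓝[>] (0 : ℝ), DifferentiableAt ℝ φ (x, y)) :
    NormalDerivLimit a (fun q => w q - φ q) x (L - M) := by
  simpa only [sub_eq_add_neg] using hL.add hM.neg hw (hφ.mono fun _ h => h.neg)

lemma NormalDerivLimit.const_add (hL : NormalDerivLimit a w x L) (c : ℝ) :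
    NormalDerivLimit a (fun q => c + w q) x L := by
  simpa [NormalDerivLimit] using hL

lemma NormalDerivLimit.comp_add_base {z : En n} (hL : NormalDerivLimit a w (x + z) L) :
    NormalDerivLimit a (fun q => w (q + (z, 0))) x L := by
  simpa [NormalDerivLimit, fderiv_comp_add_right] using hL

lemma normalDerivLimit_comp_fst {g : En n → ℝ} (hg : DifferentiableAt ℝ g x) :
    NormalDerivLimit a (fun q => g q.1) x 0 := by
  refine tendsto_const_nhds.congr fun y => ?_
  have hchain : HasFDerivAt (fun q : En n × ℝ => g q.1) _ (x, y) :=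
    hg.hasFDerivAt.comp (x, y) hasFDerivAt_fst
  simp [hchain.fderiv]

lemma normalDerivLimit_comp_snd {g g' : ℝ → ℝ} (hg : ∀ y > 0, HasDerivAt g (g' y) y)
    (hL : Tendsto (fun y => y ^ a * g' y) (𝓝[>] 0) (𝓝 L)) :
    NormalDerivLimit a (fun q => g q.2) x L := by
  refine hL.congr' ?_
  filter_upwards [self_mem_nhdsWithin] with y hy
  have hchain : HasFDerivAt (fun q : En n × ℝ => g q.2)
      (g' y • ContinuousLinearMap.snd ℝ (En n) ℝ) (x, y) :=
    (hg y hy).comp_hasFDerivAt (x, y) hasFDerivAt_snd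
  simp [hchain.fderiv]

lemma normalDerivLimit_snd_sq (ha : -1 < a) :
    NormalDerivLimit a (fun q : En n × ℝ => q.2 ^ 2) x 0 := by
  refine normalDerivLimit_comp_snd (g := fun y => y ^ 2) (g' := fun y => 2 * y)
    (fun y _ => by simpa using hasDerivAt_pow 2 y) ?_
  have hlim : Tendsto (fun y : ℝ => 2 * y ^ (a + 1)) (𝓝[>] 0) (𝓝 0) := by
    have hcont := (Real.continuousAt_rpow_const 0 (a + 1) (.inr (by linarith))).tendsto
    rw [Real.zero_rpow (by linarith)] at hcont
    simpa using (hcont.mono_left nhdsWithin_le_nhds).const_mul 2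
  refine hlim.congr' ?_
  filter_upwards [self_mem_nhdsWithin] with y hy
  rw [Real.rpow_add_one (ne_of_gt hy)]
  ring

lemma normalDerivLimit_snd_rpow (p : ℝ) :
    NormalDerivLimit (1 - p) (fun q : En n × ℝ => q.2 ^ p) x p := by
  refine normalDerivLimit_comp_snd (g := fun y => y ^ p) (g' := fun y => p * y ^ (p - 1))
    (fun y hy => Real.hasDerivAt_rpow_const (.inl hy.ne')) (tendsto_const_nhds.congr' ?_)
  filter_upwards [self_mem_nhdsWithin] with y hy
  rw [mul_left_comm, ← Real.rpow_add hy]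
  simp

/-- If `y^a ∂_y w` had a positive limit, `w` would increase strictly away from the base. -/
lemma NormalDerivLimit.nonpos (hL : NormalDerivLimit a w x L)
    (hw : ∀ᶠ y in 𝓝[>] (0 : ℝ), DifferentiableAt ℝ w (x, y))
    (hcont : ContinuousWithinAt (fun y => w (x, y)) (Ici 0) 0)
    (hmax : ∀ᶠ y in 𝓝[>] (0 : ℝ), w (x, y) ≤ w (x, 0)) : L ≤ 0 := by
  by_contra! hpos
  obtain ⟨d, hd, hIoo⟩ := mem_nhdsGT_iff_exists_Ioo_subset.1
    ((hL.eventually_const_lt hpos).and (hw.and hmax))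
  have hd : 0 < d := hd
  have hderiv (y : ℝ) (hy : y ∈ Ioo 0 d) :
      HasDerivAt (fun y => w (x, y)) (fderiv ℝ w (x, y) (0, 1)) y :=
    (hIoo hy).2.1.hasFDerivAt.comp_hasDerivAt y ((hasDerivAt_const y x).prodMk (hasDerivAt_id y))
  have hmono : StrictMonoOn (fun y => w (x, y)) (Icc 0 (d / 2)) := by
    refine strictMonoOn_of_deriv_pos (convex_Icc 0 (d / 2)) (fun y hy => ?_) fun y hy => ?_
    · rcases hy.1.eq_or_lt with rfl | hy₀
      · exact hcont.mono Icc_subset_Ici_self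
      · exact (hderiv y ⟨hy₀, by linarith [hy.2]⟩).continuousAt.continuousWithinAt
    · rw [interior_Icc] at hy
      have hy' : y ∈ Ioo 0 d := ⟨hy.1, by linarith [hy.2]⟩
      rw [(hderiv y hy').deriv]
      exact pos_of_mul_pos_right (hIoo hy').1 (Real.rpow_nonneg hy.1.le a)
  have hlt : w (x, 0) < w (x, d / 2) :=
    hmono ⟨le_rfl, by linarith⟩ ⟨by linarith, le_rfl⟩ (by linarith)
  exact hlt.not_ge (hIoo ⟨by linarith, by linarith⟩).2.2

end NormalDerivative

section MaximumPrinciple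

variable {n : ℕ} {a r : ℝ} {u w : En n × ℝ → ℝ} {p : En n × ℝ} {x : En n}

lemma IsAHarmonicOn.contDiffAt (hu : IsAHarmonicOn a u (halfBall n r)) (hp : p ∈ halfBall n r) :
    ContDiffAt ℝ 2 u p :=
  hu.1.contDiffAt (isOpen_halfBall.mem_nhds hp)

lemma IsAHarmonicOn.aLaplacian_eq_zero {Ω : Set (En n × ℝ)} (hu : IsAHarmonicOn a u Ω)
    (hp : p ∈ Ω) : aLaplacian a u p = 0 :=
  hu.2 p hp

lemma IsAHarmonicOn.neg (hu : IsAHarmonicOn a u (halfBall n r)) :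
    IsAHarmonicOn a (fun q => -u q) (halfBall n r) :=
  ⟨hu.1.neg, fun p hp => (aLaplacian_neg (hu.contDiffAt hp)).trans (by
    rw [hu.aLaplacian_eq_zero hp, neg_zero])⟩

lemma eventually_differentiableAt_vertical (hw : ContDiffOn ℝ 2 w (halfBall n r))
    (hx : x ∈ flatBall n r) : ∀ᶠ y in 𝓝[>] (0 : ℝ), DifferentiableAt ℝ w (x, y) := by
  filter_upwards [eventually_mem_halfBall hx] with y hy
  exact (hw.contDiffAt (isOpen_halfBall.mem_nhds hy)).differentiableAt two_ne_zero

lemma aLaplacian_nonpos_of_isMaxOn (hw : ContDiffOn ℝ 2 w (halfBall n r)) (hp : p ∈ halfBall n r)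
    (hmax : IsMaxOn w (closedHalfBall n r) p) : aLaplacian a w p ≤ 0 := by
  have hnhds := isOpen_halfBall.mem_nhds hp
  exact aLaplacian_nonpos_of_isLocalMax (hw.contDiffAt hnhds)
    (hmax.isLocalMax (mem_of_superset hnhds halfBall_subset_closedHalfBall))

lemma NormalDerivLimit.nonpos_of_isMaxOn {L : ℝ} (hL : NormalDerivLimit a w x L)
    (hw : ContDiffOn ℝ 2 w (halfBall n r)) (hcont : ContinuousOn w (closedHalfBall n r))
    (hx : x ∈ flatBall n r) (hmax : IsMaxOn w (closedHalfBall n r) (x, 0)) : L ≤ 0 := by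
  have hvert := (eventually_mem_halfBall hx).mono fun y hy => halfBall_subset_closedHalfBall hy
  have hbase : (x, (0 : ℝ)) ∈ closedHalfBall n r := base_mem_closedHalfBall (le_of_lt hx)
  refine hL.nonpos (eventually_differentiableAt_vertical hw hx) ?_ (hvert.mono fun y hy => hmax hy)
  refine continuousWithinAt_Ioi_iff_Ici.1 ((hcont _ hbase).tendsto.comp ?_)
  exact tendsto_nhdsWithin_iff.2 ⟨(Continuous.prodMk_right x).continuousWithinAt, hvert⟩

lemma mem_closedSpherePlus_or_mem_halfBall_or_base (hp : p ∈ closedHalfBall n 1) :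
    p ∈ closedSpherePlus n ∨ p ∈ halfBall n 1 ∨ ∃ x ∈ flatBall n 1, p = (x, 0) := by
  obtain ⟨x, y⟩ := p
  rcases hp.1.eq_or_lt with hsphere | hlt
  · exact .inl ⟨by simpa using hsphere, hp.2⟩
  rcases hp.2.eq_or_lt with hy | hy
  · obtain rfl : y = 0 := hy.symm
    refine .inr (.inr ⟨x, ?_, rfl⟩)
    exact (sq_lt_sq₀ (norm_nonneg x) zero_le_one).1 (by simpa using hlt)
  · exact .inr (.inl ⟨hlt, hy⟩)

lemma le_of_aLaplacian_pos (hw : ContDiffOn ℝ 2 w (halfBall n 1))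
    (hcont : ContinuousOn w (closedHalfBall n 1)) (hpos : ∀ p ∈ halfBall n 1, 0 < aLaplacian a w p)
    {m : ℝ} (hsphere : ∀ p ∈ closedSpherePlus n, w p ≤ m) (hbase : ∀ x ∈ flatBall n 1, w (x, 0) ≤ m)
    (hp : p ∈ closedHalfBall n 1) : w p ≤ m := by
  obtain ⟨p₀, hp₀, hmax⟩ := isCompact_closedHalfBall.exists_isMaxOn ⟨p, hp⟩ hcont
  refine (hmax hp).trans ?_
  rcases mem_closedSpherePlus_or_mem_halfBall_or_base hp₀ with hp₀ | hp₀ | ⟨x, hx, rfl⟩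
  · exact hsphere p₀ hp₀
  · exact absurd (aLaplacian_nonpos_of_isMaxOn hw hp₀ hmax) (hpos p₀ hp₀).not_ge
  · exact hbase x hx

lemma le_of_hasDerivWithinAt_of_sub_mul_le {g : ℝ → ℝ} {g' c t : ℝ}
    (hg : HasDerivWithinAt g g' (Iio t) t)
    (hmax : ∀ᶠ τ in 𝓝[<] t, g τ - c * τ ≤ g t - c * t) : c ≤ g' := by
  rw [hasDerivWithinAt_iff_tendsto_slope' self_notMem_Iio] at hg
  refine ge_of_tendsto hg ?_
  filter_upwards [hmax, self_mem_nhdsWithin] with τ hτ hlt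
  rw [slope_def_field, le_div_iff_of_neg (sub_neg.2 hlt)]
  linarith

end MaximumPrinciple

section Comparison

variable {n : ℕ} {a : ℝ} {v : ℝ → En n × ℝ → ℝ}

lemma IsFracHeatSolution.neg (hv : IsFracHeatSolution a v) :
    IsFracHeatSolution a fun t p => -v t p := by
  refine ⟨hv.1.neg, fun t ht => (hv.2.1 t ht).neg, fun t ht x hx => ?_⟩
  obtain ⟨hdiff, hlim⟩ := hv.2.2 t ht x hx
  refine ⟨hdiff.neg, ?_⟩
  rw [derivWithin.fun_neg]
  exact hlim.neg

lemma continuousOn_slice {T : Set ℝ} {S : Set (En n × ℝ)}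
    (hv : ContinuousOn (fun q : ℝ × (En n × ℝ) => v q.1 q.2) (T ×ˢ S)) {t : ℝ} (ht : t ∈ T) :
    ContinuousOn (v t) S :=
  hv.comp (Continuous.prodMk_right t).continuousOn fun _ hp => ⟨ht, hp⟩

lemma IsFracHeatSolution.le_of_isMaxOn_base (hv : IsFracHeatSolution a v) {φ : En n × ℝ → ℝ}
    (hφ : ContDiffOn ℝ 2 φ (halfBall n 1)) (hφcont : ContinuousOn φ (closedHalfBall n 1))
    {c ℓ t : ℝ} {x : En n} (ht : t ∈ Ioc (-1 : ℝ) 0) (hx : x ∈ flatBall n 1)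
    (hℓ : NormalDerivLimit a φ x ℓ)
    (hspace : IsMaxOn (fun p => v t p - φ p) (closedHalfBall n 1) (x, 0))
    (htime : ∀ τ ∈ Ioo (-1) t, v τ (x, 0) - c * τ ≤ v t (x, 0) - c * t) : c ≤ ℓ := by
  have ht' := Ioc_subset_Icc_self ht
  have hharm := (hv.2.1 t ht').1
  obtain ⟨hdiff, hlim⟩ := hv.2.2 t ht x hx
  have hnormal : derivWithin (fun τ => v τ (x, 0)) (Ioc (-1) 0) t - ℓ ≤ 0 :=
    (hlim.sub hℓ (eventually_differentiableAt_vertical hharm hx)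
      (eventually_differentiableAt_vertical hφ hx)).nonpos_of_isMaxOn (hharm.sub hφ)
      ((continuousOn_slice hv.1 ht').sub hφcont) hx hspace
  have hderiv := hdiff.hasDerivWithinAt.mono_of_mem_nhdsWithin (mem_of_superset
    (Ioo_mem_nhdsLT ht.1) fun τ hτ => ⟨hτ.1, hτ.2.le.trans ht.2⟩)
  have := le_of_hasDerivWithinAt_of_sub_mul_le hderiv
    (mem_of_superset (Ioo_mem_nhdsLT ht.1) htime)
  linarith

lemma IsFracHeatSolution.le_supersolution (hv : IsFracHeatSolution a v) {φ : En n × ℝ → ℝ}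
    (hφ : ContDiffOn ℝ 2 φ (halfBall n 1)) (hφcont : ContinuousOn φ (closedHalfBall n 1))
    (hlap : ∀ p ∈ halfBall n 1, aLaplacian a φ p < 0) {c ℓ : ℝ} (hℓc : ℓ < c)
    (hℓ : ∀ x ∈ flatBall n 1, NormalDerivLimit a φ x ℓ) {T : ℝ} (hT : T ∈ Icc (-1 : ℝ) 0)
    (hinitial : ∀ p ∈ closedHalfBall n 1, v (-1) p ≤ φ p + c * (-1))
    (hlateral : ∀ t ∈ Icc (-1) T, ∀ p ∈ closedSpherePlus n, v t p ≤ φ p + c * t)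
    {t : ℝ} (ht : t ∈ Icc (-1) T) {p : En n × ℝ} (hp : p ∈ closedHalfBall n 1) :
    v t p ≤ φ p + c * t := by
  have hT0 : Icc (-1) T ⊆ Icc (-1 : ℝ) 0 := Icc_subset_Icc_right hT.2
  have hcont : ContinuousOn (fun q : ℝ × (En n × ℝ) => v q.1 q.2 - φ q.2 - c * q.1)
      (Icc (-1) T ×ˢ closedHalfBall n 1) :=
    ((hv.1.mono (prod_mono_left hT0)).sub
      (hφcont.comp continuousOn_snd fun _ hq => hq.2)).sub (by fun_prop)
  obtain ⟨⟨t₀, p₀⟩, ⟨ht₀, hp₀⟩, hmaxOn⟩ :=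
    (isCompact_Icc.prod isCompact_closedHalfBall).exists_isMaxOn ⟨(t, p), ht, hp⟩ hcont
  have hmax (τ) (hτ : τ ∈ Icc (-1) T) (q) (hq : q ∈ closedHalfBall n 1) :
      v τ q - φ q - c * τ ≤ v t₀ p₀ - φ p₀ - c * t₀ := hmaxOn (mk_mem_prod hτ hq)
  suffices v t₀ p₀ - φ p₀ - c * t₀ ≤ 0 by linarith [hmax t ht p hp]
  have hspace : IsMaxOn (fun p => v t₀ p - φ p) (closedHalfBall n 1) p₀ :=
    isMaxOn_iff.2 fun q hq => by linarith [hmax t₀ ht₀ q hq]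
  have hharm := hv.2.1 t₀ (hT0 ht₀)
  rcases ht₀.1.eq_or_lt with rfl | ht₀'
  · linarith [hinitial p₀ hp₀]
  rcases mem_closedSpherePlus_or_mem_halfBall_or_base hp₀ with hp₀ | hp₀ | ⟨x, hx, rfl⟩
  · linarith [hlateral t₀ ht₀ p₀ hp₀]
  · have hnonpos := aLaplacian_nonpos_of_isMaxOn (a := a) (hharm.1.sub hφ) hp₀ hspace
    rw [aLaplacian_sub (hharm.contDiffAt hp₀) (hφ.contDiffAt (isOpen_halfBall.mem_nhds hp₀)),
      hharm.aLaplacian_eq_zero hp₀] at hnonpos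
    linarith [hlap p₀ hp₀]
  · have hle := hv.le_of_isMaxOn_base hφ hφcont ⟨ht₀', (hT0 ht₀).2⟩ hx (hℓ x hx) hspace
      (c := c) fun τ hτ => by linarith [hmax τ ⟨hτ.1.le, hτ.2.le.trans ht₀.2⟩ (x, 0) hp₀]
    exact absurd hℓc hle.not_gt

end Comparison

section CornerBarrier

variable {n : ℕ} {s : ℝ} {e x : En n} {X : En n × ℝ}

/-- The barrier `2 (2 - 2⟪e, x⟫)^s - y^{2s}` at the boundary point `(e, 0)` of the unit half ball,
`‖e‖ = 1`. There `2 - 2⟪e, x⟫` dominates the squared distance to `(e, 0)`. The first term is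
superharmonic, because it is concave, and insensitive to `y^a ∂_y`, while the `a`-harmonic second
term has constant negative conormal derivative. -/
def cornerBarrier (s : ℝ) (e : En n) (X : En n × ℝ) : ℝ :=
  2 * (2 - 2 * ⟪e, X.1⟫) ^ s - X.2 ^ (2 * s)

lemma dist_sq_le_two_sub_inner (he : ‖e‖ = 1) (hX : X ∈ closedHalfBall n 1) :
    ‖X.1 - e‖ ^ 2 + X.2 ^ 2 ≤ 2 - 2 * ⟪e, X.1⟫ := by
  rw [norm_sub_sq_real, real_inner_comm, he]
  linarith [hX.1]

lemma norm_sub_rpow_le_cornerBarrier (hs : 0 < s) (he : ‖e‖ = 1) (hX : X ∈ closedHalfBall n 1) :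
    ‖X - (e, 0)‖ ^ (2 * s) ≤ cornerBarrier s e X := by
  have hq := dist_sq_le_two_sub_inner he hX
  have hpow {r : ℝ} (hr : 0 ≤ r) (hrq : r ^ 2 ≤ 2 - 2 * ⟪e, X.1⟫) :
      r ^ (2 * s) ≤ (2 - 2 * ⟪e, X.1⟫) ^ s := by
    rw [Real.rpow_mul hr, Real.rpow_two]
    exact Real.rpow_le_rpow (sq_nonneg r) hrq hs.le
  have hdist : ‖X - (e, 0)‖ ^ 2 ≤ 2 - 2 * ⟪e, X.1⟫ := by
    rw [Prod.norm_def]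
    rcases max_choice ‖(X - (e, 0)).1‖ ‖(X - (e, 0)).2‖ with h | h <;> rw [h]
    · exact le_trans (by simpa using sq_nonneg X.2) hq
    · exact le_trans (by simp) hq
  have hX₂ := hpow hX.2 (by nlinarith [sq_nonneg ‖X.1 - e‖])
  have := hpow (norm_nonneg _) hdist
  rw [cornerBarrier]
  linarith

lemma inner_lt_one_of_mem_flatBall (he : ‖e‖ = 1) (hx : x ∈ flatBall n 1) : ⟪e, x⟫ < 1 :=
  (real_inner_le_norm e x).trans_lt (by rw [he, one_mul]; exact hx)

lemma continuous_cornerBarrier (hs : 0 < s) : Continuous (cornerBarrier s e) := by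
  refine .sub (continuous_const.mul (.rpow_const ?_ fun _ => .inr hs.le))
    (continuous_snd.rpow_const fun _ => .inr (by positivity))
  exact continuous_const.sub (continuous_const.mul (continuous_const.inner continuous_fst))

lemma contDiffAt_inner_rpow (hx : ⟪e, X.1⟫ < 1) :
    ContDiffAt ℝ 2 (fun q : En n × ℝ => (2 - 2 * ⟪e, q.1⟫) ^ s) X :=
  ContDiffAt.rpow_const_of_ne
    (contDiffAt_const.sub (contDiffAt_const.mul (contDiffAt_const.inner ℝ contDiffAt_fst)))
    (by linarith)

lemma contDiffAt_snd_rpow {p : ℝ} (hX : 0 < X.2) :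
    ContDiffAt ℝ 2 (fun q : En n × ℝ => q.2 ^ p) X :=
  contDiffAt_snd.rpow_const_of_ne hX.ne'

lemma contDiffAt_cornerBarrier (he : ‖e‖ = 1) (hX : X ∈ halfBall n 1) :
    ContDiffAt ℝ 2 (cornerBarrier s e) X :=
  (contDiffAt_const.mul (contDiffAt_inner_rpow
    (inner_lt_one_of_mem_flatBall he (fst_mem_flatBall zero_le_one hX.1)))).sub
    (contDiffAt_snd_rpow hX.2)

lemma aLaplacian_inner_rpow {a : ℝ} (he : ‖e‖ = 1) (hX : ⟪e, X.1⟫ < 1) :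
    aLaplacian a (fun q : En n × ℝ => (2 - 2 * ⟪e, q.1⟫) ^ s) X =
      4 * s * (s - 1) * (2 - 2 * ⟪e, X.1⟫) ^ (s - 2) := by
  have hderiv (p : ℝ) {r : ℝ} (hr : r < 1) :
      HasDerivAt (fun r => (2 - 2 * r) ^ p) (-2 * p * (2 - 2 * r) ^ (p - 1)) r := by
    have hlin : HasDerivAt (fun r : ℝ => 2 - 2 * r) (-2) r := by
      simpa using ((hasDerivAt_id r).const_mul 2).const_sub 2
    exact hlin.rpow_const (.inl (by linarith))
  have h := aLaplacian_comp_inner_fst (a := a) e ((eventually_lt_nhds hX).mono fun r => hderiv s)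
    ((hderiv (s - 1) hX).const_mul (-2 * s))
  rw [h, he, show s - 1 - 1 = s - 2 by ring]
  ring

lemma aLaplacian_snd_rpow (p : ℝ) (hX : 0 < X.2) :
    aLaplacian (1 - p) (fun q : En n × ℝ => q.2 ^ p) X = 0 := by
  have hderiv (p : ℝ) {r : ℝ} (hr : 0 < r) : HasDerivAt (fun r => r ^ p) (p * r ^ (p - 1)) r :=
    Real.hasDerivAt_rpow_const (.inl hr.ne')
  have h := aLaplacian_comp_snd (a := 1 - p) ((eventually_gt_nhds hX).mono fun r => hderiv p)
    ((hderiv (p - 1) hX).const_mul p)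
  rw [h, Real.rpow_sub_one hX.ne' (p - 1)]
  field_simp
  ring

lemma aLaplacian_cornerBarrier_neg (hs : s ∈ Ioo (0 : ℝ) 1) (he : ‖e‖ = 1)
    (hX : X ∈ halfBall n 1) : aLaplacian (1 - 2 * s) (cornerBarrier s e) X < 0 := by
  have hinner := inner_lt_one_of_mem_flatBall he (fst_mem_flatBall zero_le_one hX.1)
  have hcontDiff := contDiffAt_inner_rpow (s := s) hinner
  change aLaplacian _ (fun q : En n × ℝ => 2 * (2 - 2 * ⟪e, q.1⟫) ^ s - q.2 ^ (2 * s)) X < 0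
  rw [aLaplacian_sub (contDiffAt_const.mul hcontDiff) (contDiffAt_snd_rpow hX.2),
    aLaplacian_const_mul hcontDiff, aLaplacian_inner_rpow he hinner, aLaplacian_snd_rpow _ hX.2]
  have hpow : 0 < (2 - 2 * ⟪e, X.1⟫) ^ (s - 2) := Real.rpow_pos_of_pos (by linarith) _
  nlinarith [mul_pos (mul_pos hs.1 (sub_pos.2 hs.2)) hpow]

lemma normalDerivLimit_cornerBarrier (he : ‖e‖ = 1) (hx : x ∈ flatBall n 1) :
    NormalDerivLimit (1 - 2 * s) (cornerBarrier s e) x (-(2 * s)) := by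
  have hinner := inner_lt_one_of_mem_flatBall he hx
  have hbase : DifferentiableAt ℝ (fun x => 2 * (2 - 2 * ⟪e, x⟫) ^ s) x :=
    ((((differentiableAt_const e).inner ℝ differentiableAt_id).const_mul 2).const_sub 2
      |>.rpow_const (.inl (by simp only [id]; linarith))).const_mul 2
  have h := (normalDerivLimit_comp_fst (a := 1 - 2 * s) hbase).sub
    (normalDerivLimit_snd_rpow (2 * s))
    (.of_forall fun y => hbase.comp (x, y) (f := Prod.fst) differentiableAt_fst)
    (eventually_nhdsWithin_of_forall fun y hy =>
      (contDiffAt_snd_rpow (X := (x, y)) hy).differentiableAt two_ne_zero)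
  rwa [zero_sub] at h

lemma cornerBarrier_smul (hs : 0 < s) (he : ‖e‖ = 1) {r : ℝ} (hr : r ≤ 1) :
    cornerBarrier s e (r • e, 0) = 2 * 2 ^ s * (1 - r) ^ s := by
  simp only [cornerBarrier, inner_smul_right, real_inner_self_eq_norm_sq, he]
  rw [Real.zero_rpow (mul_pos two_pos hs).ne', sub_zero, mul_assoc,
    ← Real.mul_rpow zero_le_two (sub_nonneg.2 hr)]
  ring_nf

end CornerBarrier

section HeatReplacement

variable {n : ℕ} {a s ε : ℝ} {ω : ℝ → ℝ} {u v : ℝ → En n × ℝ → ℝ}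

/-- `v` solves the localized fractional heat equation with the values of `u` on the parabolic
boundary, where `u` is continuous with modulus `ω` and `a`-harmonic at all times. -/
structure IsHeatReplacement (a : ℝ) (ω : ℝ → ℝ) (u v : ℝ → En n × ℝ → ℝ) : Prop where
  continuousOn : ContinuousOn (fun q : ℝ × (En n × ℝ) => u q.1 q.2)
    (Icc (-1 : ℝ) 0 ×ˢ closedHalfBall n 1)
  modulus : HasModulus ω u
  harmonic : ∀ t ∈ Icc (-1 : ℝ) 0, IsAHarmonicOn a (u t) (halfBall n 1)
  heat : IsFracHeatSolution a v
  initial : ∀ p ∈ closedHalfBall n 1, v (-1) p = u (-1) p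
  lateral : ∀ t ∈ Icc (-1 : ℝ) 0, ∀ p ∈ closedSpherePlus n, v t p = u t p

lemma closedSpherePlus_subset_closedHalfBall : closedSpherePlus n ⊆ closedHalfBall n 1 :=
  fun _ hp => ⟨by rw [hp.1]; norm_num, hp.2⟩

lemma HasModulus.le_corner_of_le (hu : HasModulus ω u) (hω : IsModulus ω) {K M : ℝ}
    (hK : ∀ r ∈ Icc (0 : ℝ) 2, ω r ≤ ε / 2 + K * r ^ (2 * s)) (hK₀ : 0 ≤ K) (hs : 0 < s)
    (hM : ∀ r ∈ Icc (0 : ℝ) 1, ω r ≤ ε / 2 + M * r) {e : En n} (he : ‖e‖ = 1) {t T : ℝ}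
    (hT : T ∈ Icc (-1 : ℝ) 0) (ht : t ∈ Icc (-1) T) {X : En n × ℝ} (hX : X ∈ closedHalfBall n 1) :
    u t X ≤ u T (e, 0) + ε + M * (T - t) + K * cornerBarrier s e X := by
  have ht₀ : t ∈ Icc (-1 : ℝ) 0 := ⟨ht.1, ht.2.trans hT.2⟩
  have hcorner : (e, (0 : ℝ)) ∈ closedHalfBall n 1 := base_mem_closedHalfBall he.le
  have hnorm {Y : En n × ℝ} (hY : Y ∈ closedHalfBall n 1) : ‖Y‖ ≤ 1 := by
    refine max_le (norm_fst_le_of_mem_closedHalfBall zero_le_one hY) ?_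
    rw [Real.norm_eq_abs, abs_le_one_iff_mul_self_le_one]
    nlinarith [hY.1, sq_nonneg ‖Y.1‖]
  have hdist : ‖X - (e, 0)‖ ≤ 2 :=
    (norm_sub_le _ _).trans (by linarith [hnorm hX, hnorm hcorner])
  have hspace := (le_abs_self _).trans (hu.space t ht₀ X hX (e, 0) hcorner)
  have htime := (le_abs_self _).trans (hu.time_of_norm_le hω ht₀ hT he.le)
  rw [abs_sub_comm, abs_of_nonneg (sub_nonneg.2 ht.2)] at htime
  have hωspace := hK _ ⟨norm_nonneg _, hdist⟩
  have hωtime := hM (T - t) ⟨sub_nonneg.2 ht.2, by linarith [ht.1, hT.2]⟩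
  have := mul_le_mul_of_nonneg_left (norm_sub_rpow_le_cornerBarrier hs he hX) hK₀
  linarith

lemma IsHeatReplacement.le_add_cornerBarrier (huv : IsHeatReplacement (1 - 2 * s) ω u v)
    (hω : IsModulus ω) (hs : s ∈ Ioo (0 : ℝ) 1) {K M : ℝ} (hK₀ : 0 < K)
    (hK : ∀ r ∈ Icc (0 : ℝ) 2, ω r ≤ ε / 2 + K * r ^ (2 * s))
    (hM : ∀ r ∈ Icc (0 : ℝ) 1, ω r ≤ ε / 2 + M * r) (hMK : M < K * (2 * s))
    {e : En n} (he : ‖e‖ = 1) {T : ℝ} (hT : T ∈ Icc (-1 : ℝ) 0) {X : En n × ℝ}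
    (hX : X ∈ closedHalfBall n 1) : v T X ≤ u T (e, 0) + ε + K * cornerBarrier s e X := by
  set φ : En n × ℝ → ℝ := fun p => (u T (e, 0) + ε + M * T) + K * cornerBarrier s e p with hφdef
  have hbdry {t : ℝ} (ht : t ∈ Icc (-1) T) {p} (hp : p ∈ closedHalfBall n 1) :
      u t p ≤ φ p + -M * t := by
    have := huv.modulus.le_corner_of_le hω hK hK₀.le hs.1 hM he hT ht hp
    simp only [hφdef]
    linarith
  have hφ (p) (hp : p ∈ halfBall n 1) : ContDiffWithinAt ℝ 2 φ (halfBall n 1) p :=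
    (contDiffAt_const.add (contDiffAt_const.mul
      (contDiffAt_cornerBarrier he hp))).contDiffWithinAt
  have hφcont : Continuous φ :=
    continuous_const.add (continuous_const.mul (continuous_cornerBarrier hs.1))
  have hlap (p) (hp : p ∈ halfBall n 1) : aLaplacian (1 - 2 * s) φ p < 0 := by
    rw [aLaplacian_const_add, aLaplacian_const_mul (contDiffAt_cornerBarrier he hp)]
    exact mul_neg_of_pos_of_neg hK₀ (aLaplacian_cornerBarrier_neg hs he hp)
  have h := huv.heat.le_supersolution (c := -M) hφ hφcont.continuousOn hlap (by linarith)
    (fun x hx => ((normalDerivLimit_cornerBarrier he hx).const_mul K).const_add _) hT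
    (fun p hp => (huv.initial p hp).trans_le (hbdry ⟨le_rfl, hT.1⟩ hp))
    (fun t ht p hp => (huv.lateral t ⟨ht.1, ht.2.trans hT.2⟩ p hp).trans_le
      (hbdry ht (closedSpherePlus_subset_closedHalfBall hp))) ⟨hT.1, le_rfl⟩ hX
  simp only [hφdef] at h
  linarith

lemma exists_le_add_cornerBarrier (n : ℕ) (hs : s ∈ Ioo (0 : ℝ) 1) (hω : IsModulus ω)
    (hε : 0 < ε) : ∃ K ≥ 0, ∀ u v : ℝ → En n × ℝ → ℝ, IsHeatReplacement (1 - 2 * s) ω u v →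
      ∀ e : En n, ‖e‖ = 1 → ∀ t ∈ Icc (-1 : ℝ) 0, ∀ X ∈ closedHalfBall n 1,
        v t X ≤ u t (e, 0) + ε + K * cornerBarrier s e X := by
  have hs₀ := hs.1
  obtain ⟨K₀, hK₀, hωK₀⟩ := hω.exists_le_add_mul_rpow (half_pos hε) (mul_pos two_pos hs₀) 2
  obtain ⟨M, hM₀, hωM⟩ := hω.exists_le_add_mul_rpow (half_pos hε) one_pos 1
  simp only [Real.rpow_one] at hωM
  obtain ⟨K, hK₀K, hMK⟩ : ∃ K ≥ K₀, M < K * (2 * s) :=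
    ⟨K₀ + (M + 1) / (2 * s), le_add_of_nonneg_right (by positivity), by
      rw [add_mul, div_mul_cancel₀ _ (by positivity)]; nlinarith [mul_nonneg hK₀ hs₀.le]⟩
  have hK : 0 < K := pos_of_mul_pos_left (hM₀.trans_lt hMK) (by positivity)
  have hωK (r : ℝ) (hr : r ∈ Icc (0 : ℝ) 2) : ω r ≤ ε / 2 + K * r ^ (2 * s) :=
    (hωK₀ r hr).trans (by have := Real.rpow_nonneg hr.1 (2 * s); gcongr)
  exact ⟨K, hK.le, fun u v huv e he t ht X hX =>
    huv.le_add_cornerBarrier hω hs hK hωK hωM hMK he ht hX⟩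

lemma exists_eq_smul_of_norm_eq_one (hn : 1 ≤ n) (x : En n) :
    ∃ e : En n, ‖e‖ = 1 ∧ ∃ r : ℝ, 0 ≤ r ∧ x = r • e := by
  have : Nonempty (Fin n) := ⟨⟨0, hn⟩⟩
  rcases eq_or_ne x 0 with rfl | hx
  · obtain ⟨e, he⟩ := exists_norm_eq (En n) zero_le_one
    exact ⟨e, he, 0, le_rfl, (zero_smul ℝ e).symm⟩
  · exact ⟨‖x‖⁻¹ • x, norm_smul_inv_norm hx, ‖x‖, norm_nonneg x,
      by rw [smul_inv_smul₀ (norm_ne_zero_iff.2 hx)]⟩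

/-- The corner barrier at the boundary point nearest to `x`. -/
lemma exists_le_add_mul_one_sub_norm (hn : 1 ≤ n) (hs : s ∈ Ioo (0 : ℝ) 1) (hω : IsModulus ω)
    (hε : 0 < ε) : ∃ A ≥ 0, ∀ u v : ℝ → En n × ℝ → ℝ, IsHeatReplacement (1 - 2 * s) ω u v →
      ∀ t ∈ Icc (-1 : ℝ) 0, ∀ x ∈ flatBall n 1, v t (x, 0) ≤ u t (x, 0) + ε + A * (1 - ‖x‖) := by
  obtain ⟨K, hK, hcorner⟩ := exists_le_add_cornerBarrier n hs hω (half_pos hε)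
  obtain ⟨A, hA, hωA⟩ := (hω.add (isModulus_const_mul_rpow (C := K * (2 * 2 ^ s)) (by positivity)
    hs.1)).exists_le_add_mul_rpow (half_pos hε) one_pos 1
  refine ⟨A, hA, fun u v huv t ht x hx => ?_⟩
  have hx : ‖x‖ < 1 := hx
  obtain ⟨e, he, r, hr, rfl⟩ := exists_eq_smul_of_norm_eq_one hn x
  have hnorm : ‖r • e‖ = r := by rw [norm_smul, he, mul_one, Real.norm_of_nonneg hr]
  have hr₁ : 0 ≤ 1 - r := by linarith
  have hdist : ‖(e, (0 : ℝ)) - (r • e, 0)‖ = 1 - r := by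
    have : e - r • e = (1 - r) • e := by module
    rw [Prod.mk_sub_mk, this, sub_zero, Prod.norm_mk, norm_smul, he, mul_one, norm_zero,
      Real.norm_of_nonneg hr₁, max_eq_left hr₁]
  have hspace := (le_abs_self _).trans (huv.modulus.space t ht (e, 0)
    (base_mem_closedHalfBall he.le) (r • e, 0) (base_mem_closedHalfBall hx.le))
  have hle := hcorner u v huv e he t ht (r • e, 0) (base_mem_closedHalfBall hx.le)
  have hmodulus := hωA (1 - r) ⟨hr₁, by linarith⟩
  rw [hdist] at hspace
  rw [cornerBarrier_smul hs.1 he (by linarith)] at hle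
  rw [Real.rpow_one] at hmodulus
  rw [hnorm]
  linarith

lemma exists_le_add_mul_one_sub_norm_sq (hn : 1 ≤ n) (hs : s ∈ Ioo (0 : ℝ) 1) (hω : IsModulus ω)
    (hε : 0 < ε) : ∃ A > 0, ∀ u v : ℝ → En n × ℝ → ℝ, IsHeatReplacement (1 - 2 * s) ω u v →
      ∀ t ∈ Icc (-1 : ℝ) 0, ∀ X ∈ closedHalfBall n 1,
        v t X ≤ u t X + ε + A * (1 - (‖X.1‖ ^ 2 + X.2 ^ 2)) := by
  obtain ⟨A₀, hA₀, hbase⟩ := exists_le_add_mul_one_sub_norm hn hs hω hε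
  obtain ⟨A, hA₀A, hA⟩ : ∃ A ≥ A₀, 0 < A := ⟨A₀ + 1, by linarith, by linarith⟩
  refine ⟨A, hA, fun u v huv t ht X hX => ?_⟩
  have hu := huv.harmonic t ht
  have hv := huv.heat.2.1 t ht
  have hsq : ContDiff ℝ 2 fun X : En n × ℝ => ‖X.1‖ ^ 2 + X.2 ^ 2 :=
    (contDiff_fst.norm_sq ℝ).add (contDiff_snd.pow 2)
  have hlap (p) (hp : p ∈ halfBall n 1) :
      0 < aLaplacian (1 - 2 * s) (fun X => v t X - u t X + A * (‖X.1‖ ^ 2 + X.2 ^ 2)) p := by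
    rw [aLaplacian_add ((hv.contDiffAt hp).sub (hu.contDiffAt hp))
        (contDiffAt_const.mul hsq.contDiffAt),
      aLaplacian_sub (hv.contDiffAt hp) (hu.contDiffAt hp), hv.aLaplacian_eq_zero hp,
      hu.aLaplacian_eq_zero hp, aLaplacian_const_mul hsq.contDiffAt,
      aLaplacian_norm_fst_sq_add_snd_sq hp.2.ne', sub_zero, zero_add]
    exact mul_pos hA (add_pos_of_nonneg_of_pos (by positivity) (by linarith [hs.2]))
  have h := le_of_aLaplacian_pos ((hv.1.sub hu.1).add (contDiff_const.mul hsq).contDiffOn)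
    (((continuousOn_slice huv.heat.1 ht).sub (continuousOn_slice huv.continuousOn ht)).add
      (contDiff_const.mul hsq).continuous.continuousOn) hlap (m := ε + A) (fun p hp => ?_)
    (fun x hx => ?_) hX
  · linarith
  · simp only [huv.lateral t ht p hp, hp.1]
    linarith
  · have hle : v t (x, 0) ≤ u t (x, 0) + ε + A₀ * (1 - ‖x‖) := hbase u v huv t ht x hx
    have hx : ‖x‖ < 1 := hx
    have hmono : A₀ * (1 - ‖x‖) ≤ A * (1 - ‖x‖ ^ 2) := by
      gcongr
      exact pow_le_of_le_one (norm_nonneg x) hx.le two_ne_zero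
    simp only [ne_eq, OfNat.ofNat_ne_zero, not_false_eq_true, zero_pow, add_zero]
    linarith

end HeatReplacement

section Doubling

variable {n : ℕ} {a H η ρ : ℝ} {u v : ℝ → En n × ℝ → ℝ} {t : ℝ} {X : En n × ℝ} {x z : En n}

/-- Only the tangential variable is doubled: `u` is evaluated at the tangential shift of `X` by `z`,
at the cost `H ‖z‖ ^ 2`. The term in `η` makes a maximum strictly subharmonic in the interior and
strictly increasing in time on the base. -/
def doubled (H η : ℝ) (u v : ℝ → En n × ℝ → ℝ) (t : ℝ) (X : En n × ℝ) (z : En n) : ℝ :=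
  u t (X + (z, 0)) - v t X - H * ‖z‖ ^ 2 + η * (X.2 ^ 2 - (t + 1))

/-- A maximum point of `doubled H η u v` over `t ∈ [-1, 0]`, `X` in the closed half ball of radius
`1 - ρ` and `‖z‖ ≤ ρ`, which may lie on the base but not on the rest of the boundary. -/
structure IsDoubledMax (H η ρ : ℝ) (u v : ℝ → En n × ℝ → ℝ) (t : ℝ) (X : En n × ℝ) (z : En n) :
    Prop where
  time_mem : t ∈ Ioc (-1 : ℝ) 0
  mem : X ∈ halfBallWithBase n (1 - ρ)
  norm_lt : ‖z‖ < ρ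
  le : ∀ t' ∈ Icc (-1 : ℝ) 0, ∀ X' ∈ closedHalfBall n (1 - ρ), ∀ z' : En n, ‖z'‖ ≤ ρ →
    doubled H η u v t' X' z' ≤ doubled H η u v t X z

lemma continuousOn_doubled (hρ : ρ ≤ 1)
    (hu : ContinuousOn (fun q : ℝ × (En n × ℝ) => u q.1 q.2) (Icc (-1 : ℝ) 0 ×ˢ closedHalfBall n 1))
    (hv : ContinuousOn (fun q : ℝ × (En n × ℝ) => v q.1 q.2)
      (Icc (-1 : ℝ) 0 ×ˢ closedHalfBall n (1 - ρ))) :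
    ContinuousOn (fun q : (ℝ × (En n × ℝ)) × En n => doubled H η u v q.1.1 q.1.2 q.2)
      ((Icc (-1 : ℝ) 0 ×ˢ closedHalfBall n (1 - ρ)) ×ˢ Metric.closedBall 0 ρ) := by
  have hushift : ContinuousOn (fun q : (ℝ × (En n × ℝ)) × En n => u q.1.1 (q.1.2 + (q.2, 0)))
      ((Icc (-1 : ℝ) 0 ×ˢ closedHalfBall n (1 - ρ)) ×ˢ Metric.closedBall 0 ρ) :=
    hu.comp (f := fun q : (ℝ × (En n × ℝ)) × En n => (q.1.1, q.1.2 + (q.2, (0 : ℝ))))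
      (by fun_prop) fun q hq => ⟨hq.1.1,
        add_base_mem_closedHalfBall hρ hq.1.2 (mem_closedBall_zero_iff.1 hq.2)⟩
  have hv' := hv.comp (s := (Icc (-1 : ℝ) 0 ×ˢ closedHalfBall n (1 - ρ)) ×ˢ
    Metric.closedBall (0 : En n) ρ) continuousOn_fst fun q hq => hq.1
  exact ((hushift.sub hv').sub (by fun_prop)).add (by fun_prop)

lemma doubled_le (hη : 0 ≤ η) (ht : -1 ≤ t) (hX : X ∈ closedHalfBall n 1) {m : ℝ}
    (hz : u t (X + (z, 0)) - u t X ≤ m) (hH : 0 ≤ H) :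
    doubled H η u v t X z ≤ u t X - v t X + m + η := by
  have hy : η * (X.2 ^ 2 - (t + 1)) ≤ η * 1 := by
    gcongr
    nlinarith [hX.1, sq_nonneg ‖X.1‖]
  have := mul_nonneg hH (sq_nonneg ‖z‖)
  rw [doubled]
  linarith

lemma HasModulus.add_base_sub_le {ω : ℝ → ℝ} (hu : HasModulus ω u) (hω : IsModulus ω)
    (hρ : ρ ∈ Ioo (0 : ℝ) 1) (ht : t ∈ Icc (-1 : ℝ) 0) (hX : X ∈ closedHalfBall n (1 - ρ))
    (hz : ‖z‖ ≤ ρ) : u t (X + (z, 0)) - u t X ≤ ω ρ := by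
  refine ((le_abs_self _).trans (hu.space t ht _ (add_base_mem_closedHalfBall hρ.2.le hX hz) X
    (closedHalfBall_one_sub_subset hρ hX))).trans (hω.monotoneOn (norm_nonneg _) hρ.1.le ?_)
  simpa using hz

lemma exists_forall_doubled_le (hρ : ρ ∈ Ioo (0 : ℝ) 1)
    (hu : ContinuousOn (fun q : ℝ × (En n × ℝ) => u q.1 q.2) (Icc (-1 : ℝ) 0 ×ˢ closedHalfBall n 1))
    (hv : ContinuousOn (fun q : ℝ × (En n × ℝ) => v q.1 q.2)
      (Icc (-1 : ℝ) 0 ×ˢ closedHalfBall n 1)) :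
    ∃ t ∈ Icc (-1 : ℝ) 0, ∃ X ∈ closedHalfBall n (1 - ρ), ∃ z : En n, ‖z‖ ≤ ρ ∧
      ∀ t' ∈ Icc (-1 : ℝ) 0, ∀ X' ∈ closedHalfBall n (1 - ρ), ∀ z' : En n, ‖z'‖ ≤ ρ →
        doubled H η u v t' X' z' ≤ doubled H η u v t X z := by
  obtain ⟨⟨⟨t, X⟩, z⟩, ⟨⟨ht, hX⟩, hz⟩, hmax⟩ :=
    ((isCompact_Icc.prod isCompact_closedHalfBall).prod (isCompact_closedBall 0 ρ)).exists_isMaxOn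
      ⟨((0, (0, 0)), 0), ⟨by simp, base_mem_closedHalfBall (by simpa using hρ.2.le)⟩,
        by simpa using hρ.1.le⟩
      (continuousOn_doubled (H := H) (η := η) hρ.2.le hu
        (hv.mono (prod_mono_right (closedHalfBall_one_sub_subset hρ))))
  exact ⟨t, ht, X, hX, z, mem_closedBall_zero_iff.1 hz, fun t' ht' X' hX' z' hz' =>
    hmax (mk_mem_prod (mk_mem_prod ht' hX') (mem_closedBall_zero_iff.2 hz'))⟩

lemma doubled_zero_right : doubled H η u v t X 0 = u t X - v t X + η * (X.2 ^ 2 - (t + 1)) := by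
  have hX : X + ((0 : En n), (0 : ℝ)) = X := add_zero X
  simp [doubled, hX]

lemma exists_isDoubledMax {ω : ℝ → ℝ} (huv : IsHeatReplacement a ω u v) (hω : IsModulus ω)
    (hη : 0 ≤ η) (hρ : ρ ∈ Ioo (0 : ℝ) 1) (hωρ : ω ρ ≤ η) (hH : η < H * ρ ^ 2) {m : ℝ} (hm : 0 ≤ m)
    (hlayer : ∀ t ∈ Icc (-1 : ℝ) 0, ∀ X ∈ closedHalfBall n 1,
      (1 - ρ) ^ 2 ≤ ‖X.1‖ ^ 2 + X.2 ^ 2 → u t X - v t X ≤ m)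
    (ht : t ∈ Icc (-1 : ℝ) 0) (hX : X ∈ closedHalfBall n (1 - ρ))
    (hlt : m + 2 * η < doubled H η u v t X 0) : ∃ t' X' z', IsDoubledMax H η ρ u v t' X' z' := by
  obtain ⟨t₀, ht₀, X₀, hX₀, z₀, hz₀, hmax⟩ :=
    exists_forall_doubled_le (H := H) (η := η) hρ huv.continuousOn huv.heat.1
  have hX₀₁ := closedHalfBall_one_sub_subset hρ hX₀
  have hshift := (huv.modulus.add_base_sub_le hω hρ ht₀ hX₀ hz₀).trans hωρ
  have hzero : ‖(0 : En n)‖ ≤ ρ := norm_zero.trans_le hρ.1.le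
  have hH₀ : 0 < H := pos_of_mul_pos_left (hη.trans_lt hH) (sq_nonneg ρ)
  have hbound : m < u t₀ X₀ - v t₀ X₀ := by
    linarith [hmax t ht X hX 0 hzero, doubled_le (v := v) hη ht₀.1 hX₀₁ hshift hH₀.le]
  refine ⟨t₀, X₀, z₀, ⟨ht₀.1.lt_of_ne ?_, ht₀.2⟩, ⟨lt_of_not_ge ?_, hX₀.2⟩, hz₀.lt_of_ne ?_, hmax⟩
  · rintro rfl
    linarith [huv.initial X₀ hX₀₁]
  · exact fun hge => hbound.not_ge (hlayer t₀ ht₀ X₀ hX₀₁ hge)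
  · intro hz₀ρ
    have hcentre := hmax t₀ ht₀ X₀ hX₀ 0 hzero
    rw [doubled_zero_right, doubled, hz₀ρ] at hcentre
    linarith

lemma hasDerivWithinAt_Iio_comp_prodMk {E : Type*} [NormedAddCommGroup E] [NormedSpace ℝ E]
    {f : ℝ × E → ℝ} {f' : ℝ × E →L[ℝ] ℝ} {U : Set E} {γ : ℝ → E} {β : E} {t₀ t t₁ : ℝ}
    (hf : HasFDerivWithinAt f f' (Ioc t₀ t₁ ×ˢ U) (t, γ t)) (ht : t ∈ Ioc t₀ t₁)
    (hU : U ∈ 𝓝 (γ t)) (hγ : HasDerivAt γ β t) :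
    HasDerivWithinAt (fun τ => f (τ, γ τ)) (f' (1, β)) (Iio t) t := by
  have hcurve : HasDerivWithinAt (fun τ => (τ, γ τ)) (1, β) (Iio t) t :=
    ((hasDerivAt_id t).prodMk hγ).hasDerivWithinAt
  have hmem : (fun τ => (τ, γ τ)) ⁻¹' (Ioc t₀ t₁ ×ˢ U) ∈ 𝓝[<] t :=
    inter_mem (Ioc_mem_nhdsLT_of_mem ht)
      (nhdsWithin_le_nhds (hγ.continuousAt.preimage_mem_nhds hU))
  exact (hf.comp_hasDerivWithinAt t (hcurve.mono inter_subset_right)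
    fun _ hτ => hτ.1).mono_of_mem_nhdsWithin (inter_mem hmem self_mem_nhdsWithin)

namespace IsDoubledMax

lemma fst_mem_flatBall (hmax : IsDoubledMax H η ρ u v t X z) (hρ : ρ ∈ Ioo (0 : ℝ) 1) :
    X.1 ∈ flatBall n (1 - ρ) :=
  _root_.fst_mem_flatBall (by linarith [hρ.2]) hmax.mem.1

lemma fst_add_mem_flatBall (hmax : IsDoubledMax H η ρ u v t X z) (hρ : ρ ∈ Ioo (0 : ℝ) 1) :
    X.1 + z ∈ flatBall n 1 := by
  have hX : ‖X.1‖ < 1 - ρ := hmax.fst_mem_flatBall hρ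
  exact (norm_add_le _ _).trans_lt (by linarith [hmax.norm_lt])

lemma isMaxOn (hmax : IsDoubledMax H η ρ u v t X z) :
    IsMaxOn (fun p => u t (p + (z, 0)) - v t p + η * p.2 ^ 2) (closedHalfBall n (1 - ρ)) X := by
  refine isMaxOn_iff.2 fun p hp => ?_
  have := hmax.le t (Ioc_subset_Icc_self hmax.time_mem) p hp z hmax.norm_lt.le
  simp only [doubled] at this
  linarith

lemma contDiffOn (hmax : IsDoubledMax H η ρ u v t X z) (hρ : ρ ∈ Ioo (0 : ℝ) 1)
    (hu : ContDiffOn ℝ 2 (u t) (halfBall n 1)) :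
    ContDiffOn ℝ 2 (fun p => u t (p + (z, 0))) (halfBall n (1 - ρ)) :=
  hu.comp (contDiff_id.add contDiff_const).contDiffOn fun _ hp =>
    add_base_mem_halfBall hρ.2.le (halfBall_subset_closedHalfBall hp) hp.2 hmax.norm_lt

lemma snd_eq_zero (hmax : IsDoubledMax H η ρ u v t X z) (hρ : ρ ∈ Ioo (0 : ℝ) 1) (hη : 0 < η)
    (ha : -1 < a) (hu : IsAHarmonicOn a (u t) (halfBall n 1))
    (hv : IsAHarmonicOn a (v t) (halfBall n 1)) : X.2 = 0 := by
  by_contra hne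
  have hX : X ∈ halfBall n (1 - ρ) := ⟨hmax.mem.1, hmax.mem.2.lt_of_ne' hne⟩
  have hXz := add_base_mem_halfBall hρ.2.le (halfBall_subset_closedHalfBall hX) hX.2 hmax.norm_lt
  have hX₁ := halfBall_one_sub_subset hρ hX
  have hushift := hmax.contDiffOn hρ hu.1
  have hsq : ContDiff ℝ 2 fun p : En n × ℝ => p.2 ^ 2 := contDiff_snd.pow 2
  have hnonpos := aLaplacian_nonpos_of_isMaxOn (a := a)
    ((hushift.sub (hv.1.mono (halfBall_one_sub_subset hρ))).add (contDiff_const.mul hsq).contDiffOn)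
    hX hmax.isMaxOn
  have hushiftX := hushift.contDiffAt (isOpen_halfBall.mem_nhds hX)
  rw [aLaplacian_add (hushiftX.sub (hv.contDiffAt hX₁)) (contDiff_const.mul hsq).contDiffAt,
    aLaplacian_sub hushiftX (hv.contDiffAt hX₁), aLaplacian_comp_add_base,
    aLaplacian_const_mul hsq.contDiffAt, aLaplacian_snd_sq hne, hu.aLaplacian_eq_zero hXz,
    hv.aLaplacian_eq_zero hX₁] at hnonpos
  nlinarith

lemma normalDeriv_le (hmax : IsDoubledMax H η ρ u v t (x, 0) z) (hρ : ρ ∈ Ioo (0 : ℝ) 1)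
    (ha : -1 < a) (hu : ContDiffOn ℝ 2 (u t) (halfBall n 1))
    (hv : ContDiffOn ℝ 2 (v t) (halfBall n 1)) (hucont : ContinuousOn (u t) (closedHalfBall n 1))
    (hvcont : ContinuousOn (v t) (closedHalfBall n 1)) {L D : ℝ}
    (hL : NormalDerivLimit a (u t) (x + z) L) (hD : NormalDerivLimit a (v t) x D) : L ≤ D := by
  have hx : x ∈ flatBall n (1 - ρ) := hmax.fst_mem_flatBall hρ
  have hushift := hmax.contDiffOn hρ hu
  have hv' := hv.mono (halfBall_one_sub_subset hρ)
  have hsq : ContDiff ℝ 2 fun p : En n × ℝ => η * p.2 ^ 2 := contDiff_const.mul (contDiff_snd.pow 2)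
  have hushiftx := eventually_differentiableAt_vertical hushift hx
  have hvx := eventually_differentiableAt_vertical hv' hx
  have hlimit := (hL.comp_add_base.sub hD hushiftx hvx).add
    ((normalDerivLimit_snd_sq ha).const_mul η)
    (hushiftx.and hvx |>.mono fun _ h => h.1.sub h.2)
    (.of_forall fun y => hsq.contDiffAt.differentiableAt two_ne_zero)
  have hcont : ContinuousOn (fun p => u t (p + (z, 0)) - v t p + η * p.2 ^ 2)
      (closedHalfBall n (1 - ρ)) :=
    ((hucont.comp (by fun_prop) fun p hp =>
      add_base_mem_closedHalfBall hρ.2.le hp hmax.norm_lt.le).sub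
      (hvcont.mono (closedHalfBall_one_sub_subset hρ))).add hsq.continuous.continuousOn
  have := hlimit.nonpos_of_isMaxOn ((hushift.sub hv').add hsq.contDiffOn) hcont hx hmax.isMaxOn
  linarith

/-- The maximum is tested along the backward curve on which the shift `z` moves with velocity `β`,
so that `u` is differentiated in the direction of the drift. -/
lemma le_fderivWithin_sub (hmax : IsDoubledMax H η ρ u v t (x, 0) z) (hρ : ρ ∈ Ioo (0 : ℝ) 1)
    (hu : DifferentiableWithinAt ℝ (bdryFun u) (Ioc (-1 : ℝ) 0 ×ˢ flatBall n 1) (t, x + z))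
    (hv : DifferentiableWithinAt ℝ (fun τ => v τ (x, 0)) (Ioc (-1 : ℝ) 0) t) (β : En n) :
    η ≤ fderivWithin ℝ (bdryFun u) (Ioc (-1 : ℝ) 0 ×ˢ flatBall n 1) (t, x + z) (1, β) -
      derivWithin (fun τ => v τ (x, 0)) (Ioc (-1 : ℝ) 0) t - H * (2 * ⟪z, β⟫) := by
  have ht := hmax.time_mem
  obtain ⟨γ, rfl, hγ⟩ : ∃ γ : ℝ → En n, γ t = z ∧ HasDerivAt γ β t := by
    refine ⟨fun τ => z + (τ - t) • β, by simp, ?_⟩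
    simpa using (((hasDerivAt_id t).sub_const t).smul_const β).const_add z
  have hmem : flatBall n 1 ∈ 𝓝 (x + γ t) :=
    isOpen_flatBall.mem_nhds (hmax.fst_add_mem_flatBall hρ)
  have hushift := hasDerivWithinAt_Iio_comp_prodMk (γ := fun τ => x + γ τ) hu.hasFDerivWithinAt ht
    hmem (hγ.const_add x)
  have hv' := hv.hasDerivWithinAt.mono_of_mem_nhdsWithin (Ioc_mem_nhdsLT_of_mem ht)
  have hnormsq := (hγ.norm_sq.const_mul H).hasDerivWithinAt (s := Iio t)
  refine le_of_hasDerivWithinAt_of_sub_mul_le ((hushift.sub hv').sub hnormsq) ?_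
  have hsmall : ∀ᶠ τ in 𝓝[<] t, ‖γ τ‖ < ρ := nhdsWithin_le_nhds
    (hγ.continuousAt.norm.eventually_lt_const hmax.norm_lt)
  filter_upwards [hsmall, Ioo_mem_nhdsLT ht.1] with τ hτ hτt
  have := hmax.le τ ⟨hτt.1.le, hτt.2.le.trans ht.2⟩ (x, 0) ⟨hmax.mem.1.le, hmax.mem.2⟩ (γ τ) hτ.le
  simp only [doubled, Prod.mk_add_mk, add_zero] at this
  simp only [Pi.sub_apply, bdryFun]
  linarith

/-- The coupling: at a maximum the drift acts only through `2 H z`, however large `∇ₓu` is. -/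
lemma false_of_drift_small (hmax : IsDoubledMax H η ρ u v t X z) (hρ : ρ ∈ Ioo (0 : ℝ) 1)
    (hη : 0 < η) (hH : 0 ≤ H) (ha : -1 < a) {b : ℝ → En n → En n} {f : ℝ → En n → ℝ} {δ : ℝ}
    (hδ : δ * (1 + 2 * H * ρ) ≤ η) (hu : IsExtDDSolution a b f u) (hv : IsFracHeatSolution a v)
    (hb : ∀ t ∈ Icc (-1 : ℝ) 0, ∀ x ∈ flatBall n 1, ‖b t x‖ < δ)
    (hf : ∀ t ∈ Icc (-1 : ℝ) 0, ∀ x ∈ flatBall n 1, |f t x| < δ) : False := by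
  have ht := hmax.time_mem
  have ht' := Ioc_subset_Icc_self ht
  obtain ⟨x, y⟩ := X
  obtain rfl : y = 0 := hmax.snd_eq_zero hρ hη ha (hu.2.1 t ht') (hv.2.1 t ht')
  have hx : ‖x‖ < 1 - ρ := hmax.fst_mem_flatBall hρ
  have hxz : x + z ∈ flatBall n 1 := hmax.fst_add_mem_flatBall hρ
  obtain ⟨L, hL, heq⟩ := hu.2.2.2 t (x + z) ⟨ht, hxz⟩
  obtain ⟨hvdiff, hD⟩ := hv.2.2 t ht x (hx.trans (by linarith [hρ.1]))
  have hLD := hmax.normalDeriv_le hρ ha (hu.2.1 t ht').1 (hv.2.1 t ht').1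
    (continuousOn_slice hu.1 ht') (continuousOn_slice hv.1 ht') hL hD
  have htime := hmax.le_fderivWithin_sub hρ (hu.2.2.1 _ ⟨ht, hxz⟩) hvdiff (b t (x + z))
  rw [← map_add, Prod.mk_add_mk, add_zero, zero_add] at heq
  have hinner : -⟪z, b t (x + z)⟫ ≤ ρ * δ :=
    calc -⟪z, b t (x + z)⟫ ≤ ‖z‖ * ‖b t (x + z)‖ :=
          (neg_le_abs _).trans (abs_real_inner_le_norm _ _)
      _ ≤ ρ * δ := by
          gcongr
          exacts [hρ.1.le, hmax.norm_lt.le, (hb t ht' _ hxz).le]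
  have hfδ := (le_abs_self _).trans_lt (hf t ht' _ hxz)
  have := mul_le_mul_of_nonneg_left hinner hH
  linarith

end IsDoubledMax

end Doubling

section Approximation

variable {n : ℕ} {a s ε : ℝ} {ω : ℝ → ℝ} {u v : ℝ → En n × ℝ → ℝ}

lemma IsExtDDSolution.neg {b : ℝ → En n → En n} {f : ℝ → En n → ℝ}
    (hu : IsExtDDSolution a b f u) :
    IsExtDDSolution a b (fun t x => -f t x) fun t p => -u t p := by
  refine ⟨hu.1.neg, fun t ht => (hu.2.1 t ht).neg, fun q hq => (hu.2.2.1 q hq).neg,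
    fun t x htx => ?_⟩
  obtain ⟨L, hL, heq⟩ := hu.2.2.2 t x htx
  have hfderiv :
      fderivWithin ℝ (bdryFun fun t p => -u t p) (Ioc (-1 : ℝ) 0 ×ˢ flatBall n 1) (t, x) =
        -fderivWithin ℝ (bdryFun u) (Ioc (-1 : ℝ) 0 ×ˢ flatBall n 1) (t, x) :=
    fderivWithin_fun_neg ((uniqueDiffOn_Ioc _ _ t htx.1).prod
      (isOpen_flatBall.uniqueDiffWithinAt htx.2))
  refine ⟨-L, hL.neg, ?_⟩
  rw [hfderiv, neg_apply, neg_apply]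
  linarith

lemma IsHeatReplacement.neg (huv : IsHeatReplacement a ω u v) :
    IsHeatReplacement a ω (fun t p => -u t p) fun t p => -v t p where
  continuousOn := huv.continuousOn.neg
  modulus := huv.modulus.neg
  harmonic t ht := (huv.harmonic t ht).neg
  heat := huv.heat.neg
  initial p hp := congrArg Neg.neg (huv.initial p hp)
  lateral t ht p hp := congrArg Neg.neg (huv.lateral t ht p hp)

lemma exists_layer_le (hn : 1 ≤ n) (hs : s ∈ Ioo (0 : ℝ) 1) (hω : IsModulus ω) (hε : 0 < ε) :
    ∃ ρ ∈ Ioo (0 : ℝ) 1, ω ρ ≤ ε ∧ ∀ u v : ℝ → En n × ℝ → ℝ,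
      IsHeatReplacement (1 - 2 * s) ω u v → ∀ t ∈ Icc (-1 : ℝ) 0, ∀ X ∈ closedHalfBall n 1,
        (1 - ρ) ^ 2 ≤ ‖X.1‖ ^ 2 + X.2 ^ 2 → u t X - v t X ≤ ε := by
  obtain ⟨A, hA, hlayer⟩ := exists_le_add_mul_one_sub_norm_sq hn hs hω (half_pos hε)
  have hωsmall : ∀ᶠ ρ in 𝓝[>] (0 : ℝ), ω ρ < ε :=
    (hω.tendsto_zero.mono_left (nhdsWithin_mono 0 Ioi_subset_Ici_self)).eventually_lt_const hε
  obtain ⟨ρ, hωρ, hρ₁, hρA⟩ := (hωsmall.and (inter_mem (Ioo_mem_nhdsGT one_pos)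
    (Ioo_mem_nhdsGT (div_pos hε (mul_pos four_pos hA))))).exists
  refine ⟨ρ, hρ₁, hωρ.le, fun u v huv t ht X hX hnorm => ?_⟩
  have hle := hlayer _ _ huv.neg t ht X hX
  have hρA : ρ * (4 * A) < ε := (lt_div_iff₀ (mul_pos four_pos hA)).1 hρA.2
  nlinarith [mul_nonneg hA.le (sub_nonneg.2 hnorm), mul_nonneg hA.le (sq_nonneg ρ)]

lemma exists_sub_le_of_drift_small (hn : 1 ≤ n) (hs : s ∈ Ioo (0 : ℝ) 1) (hω : IsModulus ω)
    (hε : 0 < ε) : ∃ δ > 0, ∀ (b : ℝ → En n → En n) (f : ℝ → En n → ℝ)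
      (u v : ℝ → En n × ℝ → ℝ), IsExtDDSolution (1 - 2 * s) b f u →
      IsHeatReplacement (1 - 2 * s) ω u v →
      (∀ t ∈ Icc (-1 : ℝ) 0, ∀ x ∈ flatBall n 1, ‖b t x‖ < δ) →
      (∀ t ∈ Icc (-1 : ℝ) 0, ∀ x ∈ flatBall n 1, |f t x| < δ) →
      ∀ t ∈ Icc (-1 : ℝ) 0, ∀ X ∈ closedHalfBall n 1, u t X - v t X ≤ ε := by
  obtain ⟨η, hη, hηε⟩ : ∃ η > 0, 4 * η = ε := ⟨ε / 4, by positivity, by ring⟩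
  obtain ⟨ρ, hρ, hωρ, hlayer⟩ := exists_layer_le hn hs hω hη
  have hρ₀ := hρ.1
  obtain ⟨H, hH, hHρ⟩ : ∃ H > 0, H * ρ ^ 2 = 2 * η :=
    ⟨2 * η / ρ ^ 2, by positivity, by field_simp⟩
  obtain ⟨δ, hδ, hδη⟩ : ∃ δ > 0, δ * (1 + 2 * H * ρ) = η :=
    ⟨η / (1 + 2 * H * ρ), by positivity, by field_simp⟩
  refine ⟨δ, hδ, fun b f u v hu huv hb hf t ht X hX => ?_⟩
  by_cases hXρ : (1 - ρ) ^ 2 ≤ ‖X.1‖ ^ 2 + X.2 ^ 2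
  · linarith [hlayer u v huv t ht X hX hXρ]
  have hdoubled : doubled H η u v t X 0 ≤ η + 2 * η := by
    by_contra! hlt
    obtain ⟨t', X', z', hmax⟩ := exists_isDoubledMax huv hω hη.le hρ hωρ (by linarith) hη.le
      (hlayer u v huv) ht ⟨(not_le.1 hXρ).le, hX.2⟩ hlt
    exact hmax.false_of_drift_small hρ hη hH.le (by linarith [hs.2]) hδη.le hu huv.heat hb hf
  rw [doubled_zero_right] at hdoubled
  nlinarith [sq_nonneg X.2, ht.2]

theorem approximation_lemma_general (n : ℕ) (hn : 1 ≤ n) {s : ℝ} (hs : s ∈ Ioo (0 : ℝ) 1)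
    {ω : ℝ → ℝ} (hω : IsModulus ω) {ε : ℝ} (hε : 0 < ε) :
    ∃ δ > 0, ∀ (b : ℝ → En n → En n) (f : ℝ → En n → ℝ) (u v : ℝ → En n × ℝ → ℝ),
      IsExtDDSolution (1 - 2 * s) b f u → HasModulus ω u →
      (∀ t ∈ Icc (-1 : ℝ) 0, ∀ x ∈ flatBall n 1, ‖b t x‖ < δ) →
      (∀ t ∈ Icc (-1 : ℝ) 0, ∀ x ∈ flatBall n 1, |f t x| < δ) →
      IsFracHeatSolution (1 - 2 * s) v →
      (∀ p ∈ closedHalfBall n 1, v (-1) p = u (-1) p) →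
      (∀ t ∈ Icc (-1 : ℝ) 0, ∀ p ∈ closedSpherePlus n, v t p = u t p) →
      ∀ t ∈ Icc (-1 : ℝ) 0, ∀ p ∈ closedHalfBall n 1, |u t p - v t p| ≤ ε := by
  obtain ⟨δ, hδ, hle⟩ := exists_sub_le_of_drift_small hn hs hω hε
  refine ⟨δ, hδ, fun b f u v hu hmod hb hf hv hinitial hlateral t ht p hp => ?_⟩
  have huv : IsHeatReplacement (1 - 2 * s) ω u v := ⟨hu.1, hmod, hu.2.1, hv, hinitial, hlateral⟩
  have hlower := hle _ _ _ _ hu.neg huv.neg hb (by simpa only [abs_neg] using hf) t ht p hp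
  exact abs_sub_le_iff.2 ⟨hle b f u v hu huv hb hf t ht p hp, by linarith⟩

end Approximation

/-- **The approximation lemma** (Lemma 7.1): if `‖u‖_∞ ≤ 1`, `u` is `C^α` in the stated
sense, and `b`, `f` are small in `L^∞`, then `u` is uniformly close to the solution of the
drift-less problem with the same boundary data. -/
theorem approximation_lemma (n : ℕ) (hn : 1 ≤ n) (s : ℝ) (hs : s ∈ Ioo (0 : ℝ) (1/2))
    (α : ℝ) (hα : α ∈ Ioc (0 : ℝ) 1) (C₁ : ℝ) (hC₁ : 0 ≤ C₁) (ε : ℝ) (hε : 0 < ε) :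
    ∃ δ > 0, ∀ (b : ℝ → En n → En n) (f : ℝ → En n → ℝ) (u v : ℝ → En n × ℝ → ℝ),
      IsExtDDSolution (1 - 2*s) b f u →
      (∀ t ∈ Icc (-1 : ℝ) 0, ∀ p ∈ halfBall n 1, |u t p| ≤ 1) →
      (∀ t ∈ Icc (-1 : ℝ) 0, ∀ x ∈ flatBall n 1, |u t (x, 0)| ≤ C₁) →
      (∀ t ∈ Icc (-1 : ℝ) 0, ∀ t' ∈ Icc (-1 : ℝ) 0,
        ∀ x ∈ flatBall n 1, ∀ x' ∈ flatBall n 1,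
          |u t (x, 0) - u t' (x', 0)| ≤ C₁ * (|t - t'| + ‖x - x'‖) ^ α) →
      (∀ t ∈ Icc (-1 : ℝ) 0, ∀ p ∈ closedHalfBall n 1, |u t p| ≤ C₁) →
      (∀ t ∈ Icc (-1 : ℝ) 0, ∀ p ∈ closedHalfBall n 1, ∀ q ∈ closedHalfBall n 1,
          |u t p - u t q| ≤ C₁ * ‖p - q‖ ^ α) →
      (∀ t ∈ Icc (-1 : ℝ) 0, ∀ x ∈ flatBall n 1, ‖b t x‖ < δ) →
      (∀ t ∈ Icc (-1 : ℝ) 0, ∀ x ∈ flatBall n 1, |f t x| < δ) →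
      IsFracHeatSolution (1 - 2*s) v →
      (∀ p ∈ closedHalfBall n 1, v (-1) p = u (-1) p) →
      (∀ t ∈ Icc (-1 : ℝ) 0, ∀ p ∈ closedSpherePlus n, v t p = u t p) →
      ∀ t ∈ Icc (-1 : ℝ) 0, ∀ p ∈ halfBall n 1, |u t p - v t p| ≤ ε := by
  obtain ⟨δ, hδ, hclose⟩ := approximation_lemma_general n hn (s := s) ⟨hs.1, by linarith [hs.2]⟩
    (isModulus_const_mul_rpow hC₁ hα.1) hε
  refine ⟨δ, hδ, fun b f u v hu _ _ htrace _ hholder hb hf hv hinitial hlateral t ht p hp => ?_⟩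
  have hmod : HasModulus (fun r => C₁ * r ^ α) u :=
    ⟨hholder, fun t ht t' ht' x hx => by simpa using htrace t ht t' ht' x hx x hx⟩
  exact hclose b f u v hu hmod hb hf hv hinitial hlateral t ht p (halfBall_subset_closedHalfBall hp)

end
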